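/- arXiv:2602.05357 — 2 statements merged into one kernel-verified Lean document; each statement's English description precedes it below -/
import Mathlib

section
/- Let θ : ℝⁿ → [−∞,+∞] be symmetric and locally Lipschitz continuous relative to its domain, let g = θ∘λ be lower semicontinuous, let (X,Y) ∈ gph ∂g, and assume g is prox-regular and subdifferentially continuous at X. Let y ∈ ∂θ(λ(X)) and U ∈ Oⁿ(X) be such that Y = U·Diag(y)·Uᵀ. Then the set-valued subgradient map ∂g is proto-differentiable at X for Y if and only if ∂θ is proto-differentiable at λ(X) for y. -/
open Filter Topology Matrix

noncomputable section

namespace SpecPaper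

/-! ## Generic variational analysis definitions over a topological real vector space -/

variable {E : Type*}

section Generic

variable [AddCommGroup E] [Module ℝ E] [TopologicalSpace E]

/-- `f x` is finite (neither `+∞` nor `-∞`). -/
def IsFiniteAt (f : E → EReal) (x : E) : Prop :=
  f x ≠ ⊤ ∧ f x ≠ ⊥

/-- The norm induced by a given inner product. -/
noncomputable def nrm (ip : E → E → ℝ) (x : E) : ℝ :=
  Real.sqrt (ip x x)

/-- The subderivative `df(x)(w)`. -/
noncomputable def subderiv (f : E → EReal) (x w : E) : EReal :=
  Filter.liminf (fun p : ℝ × E => (((p.1)⁻¹ : ℝ) : EReal) * (f (x + p.1 • p.2) - f x))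
    ((nhdsWithin (0 : ℝ) (Set.Ioi 0)) ×ˢ nhds w)

/-- The second-order difference quotient `Δ²ₜ f(x,v)(w)`. -/
noncomputable def sdq2 (ip : E → E → ℝ) (f : E → EReal) (x v : E) (t : ℝ) (w : E) : EReal :=
  (((2 / t ^ 2) : ℝ) : EReal) * (f (x + t • w) - f x - ((t * ip v w : ℝ) : EReal))

/-- The second subderivative `d²f(x,v)(w)`. -/
noncomputable def subderiv2 (ip : E → E → ℝ) (f : E → EReal) (x v w : E) : EReal :=
  Filter.liminf (fun p : ℝ × E => sdq2 ip f x v p.1 p.2)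
    ((nhdsWithin (0 : ℝ) (Set.Ioi 0)) ×ˢ nhds w)

/-- Twice epi-differentiability of `f` at `x` for `v`. -/
def TwiceEpiDiff (ip : E → E → ℝ) (f : E → EReal) (x v : E) : Prop :=
  IsFiniteAt f x ∧
    ∀ t : ℕ → ℝ, (∀ k, 0 < t k) → Tendsto t atTop (nhds 0) →
      ∀ w : E, ∃ ws : ℕ → E, Tendsto ws atTop (nhds w) ∧
        Tendsto (fun k => sdq2 ip f x v (t k) (ws k)) atTop (nhds (subderiv2 ip f x v w))

/-- `v` is a regular subgradient of `f` at `x`. -/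
def RegSubgrad (ip : E → E → ℝ) (f : E → EReal) (x v : E) : Prop :=
  IsFiniteAt f x ∧
    (0 : EReal) ≤ Filter.liminf
      (fun y : E =>
        (((nrm ip (y - x))⁻¹ : ℝ) : EReal) * (f y - f x - ((ip v (y - x) : ℝ) : EReal)))
      (nhdsWithin x {x}ᶜ)

/-- `v` is a (limiting) subgradient of `f` at `x`. -/
def LimSubgrad (ip : E → E → ℝ) (f : E → EReal) (x v : E) : Prop :=
  ∃ xs vs : ℕ → E, (∀ k, RegSubgrad ip f (xs k) (vs k)) ∧
    Tendsto xs atTop (nhds x) ∧ Tendsto vs atTop (nhds v) ∧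
    Tendsto (fun k => f (xs k)) atTop (nhds (f x))

/-- The tangent cone to `C` at `x`. -/
def tangentCone (C : Set E) (x : E) : Set E :=
  {w | ∃ (t : ℕ → ℝ) (ws : ℕ → E), (∀ k, 0 < t k) ∧ Tendsto t atTop (nhds 0) ∧
    Tendsto ws atTop (nhds w) ∧ ∀ k, x + t k • ws k ∈ C}

/-- The regular normal cone to `C` at `x`. -/
def regNormalCone (ip : E → E → ℝ) (C : Set E) (x : E) : Set E :=
  {v | ∀ w ∈ tangentCone C x, ip v w ≤ 0}

/-- The limiting normal cone to `C` at `x`. -/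
def limNormalCone (ip : E → E → ℝ) (C : Set E) (x : E) : Set E :=
  {v | ∃ xs vs : ℕ → E, (∀ k, xs k ∈ C) ∧ (∀ k, vs k ∈ regNormalCone ip C (xs k)) ∧
    Tendsto xs atTop (nhds x) ∧ Tendsto vs atTop (nhds v)}

/-- The critical cone `C_f(x,v)`. -/
def criticalCone (ip : E → E → ℝ) (f : E → EReal) (x v : E) : Set E :=
  {w | subderiv f x w = ((ip v w : ℝ) : EReal)}

/-- `f` is locally Lipschitz continuous at `x` relative to its domain. -/
def LocLipAtRelDom (ip : E → E → ℝ) (f : E → EReal) (x : E) : Prop :=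
  IsFiniteAt f x ∧
    ∃ V ∈ nhds x, ∃ ℓ : ℝ, 0 ≤ ℓ ∧
      ∀ a ∈ V, ∀ b ∈ V, f a ≠ ⊤ → f b ≠ ⊤ →
        f a ≠ ⊥ ∧ f b ≠ ⊥ ∧ |(f a).toReal - (f b).toReal| ≤ ℓ * nrm ip (a - b)

/-- `f` is locally Lipschitz continuous relative to its domain. -/
def LocLipRelDom (ip : E → E → ℝ) (f : E → EReal) : Prop :=
  ∀ x : E, f x ≠ ⊤ → LocLipAtRelDom ip f x

/-- `v` is a proximal subgradient of `f` at `x`. -/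
def ProxSubgrad (ip : E → E → ℝ) (f : E → EReal) (x v : E) : Prop :=
  IsFiniteAt f x ∧
    ∃ r > (0 : ℝ), ∃ ε > (0 : ℝ), ∀ x' : E, nrm ip (x' - x) ≤ ε →
      f x + ((ip v (x' - x) - r / 2 * ip (x' - x) (x' - x) : ℝ) : EReal) ≤ f x'

/-- `f` is prox-regular at `x` for `v`. -/
def ProxRegularAtFor (ip : E → E → ℝ) (f : E → EReal) (x v : E) : Prop :=
  IsFiniteAt f x ∧
    (∃ δ > (0 : ℝ), LowerSemicontinuousOn f {x' | nrm ip (x' - x) < δ}) ∧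
    ∃ ε > (0 : ℝ), ∃ r : ℝ, 0 ≤ r ∧
      ∀ x₁ v₁ : E, LimSubgrad ip f x₁ v₁ → nrm ip (x₁ - x) < ε → nrm ip (v₁ - v) < ε →
        f x₁ < f x + (ε : EReal) →
        ∀ x' : E, nrm ip (x' - x) < ε →
          f x₁ + ((ip v₁ (x' - x₁) - r / 2 * ip (x' - x₁) (x' - x₁) : ℝ) : EReal) ≤ f x'

/-- `f` is prox-regular at `x` (for every subgradient). -/
def ProxRegularAt (ip : E → E → ℝ) (f : E → EReal) (x : E) : Prop :=
  ∀ v : E, LimSubgrad ip f x v → ProxRegularAtFor ip f x v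

/-- `f` is subdifferentially continuous at `x`. -/
def SubdiffContAt (ip : E → E → ℝ) (f : E → EReal) (x : E) : Prop :=
  ∀ v : E, LimSubgrad ip f x v →
    ∀ xs vs : ℕ → E, (∀ k, LimSubgrad ip f (xs k) (vs k)) →
      Tendsto xs atTop (nhds x) → Tendsto vs atTop (nhds v) →
      Tendsto (fun k => f (xs k)) atTop (nhds (f x))

/-- `f` is prox-bounded. -/
def ProxBounded (ip : E → E → ℝ) (f : E → EReal) : Prop :=
  ∃ α c : ℝ, ∀ x : E, (c : EReal) ≤ f x + ((α * ip x x : ℝ) : EReal)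

/-- The proximal mapping (as a set of minimizers). -/
def proxSet (ip : E → E → ℝ) (f : E → EReal) (γ : ℝ) (x : E) : Set E :=
  {w | ∀ w' : E,
    f w + ((1 / (2 * γ) * ip (w - x) (w - x) : ℝ) : EReal) ≤
      f w' + ((1 / (2 * γ) * ip (w' - x) (w' - x) : ℝ) : EReal)}

/-- The proximal map of `f` with parameter `γ` is single-valued around `z` and the resulting
map is directionally differentiable at `z`. -/
def ProxSingleDirDiff (ip : E → E → ℝ) (f : E → EReal) (γ : ℝ) (z : E) : Prop :=
  ∃ V ∈ nhds z, ∃ P : E → E, (∀ u ∈ V, proxSet ip f γ u = {P u}) ∧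
    ∀ h : E, ∃ L : E,
      Tendsto (fun t : ℝ => t⁻¹ • (P (z + t • h) - P z)) (nhdsWithin 0 (Set.Ioi 0)) (nhds L)

/-- The parabolic difference quotient. -/
noncomputable def parabQuot (f : E → EReal) (x w : E) (t : ℝ) (z : E) : EReal :=
  (((2 / t ^ 2) : ℝ) : EReal) *
    (f (x + t • w + (t ^ 2 / 2) • z) - f x - ((t * (subderiv f x w).toReal : ℝ) : EReal))

/-- The parabolic subderivative `d²f(x)(w | z)`. -/
noncomputable def parabSubderiv (f : E → EReal) (x w z : E) : EReal :=
  Filter.liminf (fun p : ℝ × E => parabQuot f x w p.1 p.2)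
    ((nhdsWithin (0 : ℝ) (Set.Ioi 0)) ×ˢ nhds z)

/-- `f` is parabolically epi-differentiable at `x` for `w`. -/
def ParabEpiDiff (f : E → EReal) (x w : E) : Prop :=
  (∃ z : E, parabSubderiv f x w z < ⊤) ∧
    ∀ t : ℕ → ℝ, (∀ k, 0 < t k) → Tendsto t atTop (nhds 0) →
      ∀ z : E, ∃ zs : ℕ → E, Tendsto zs atTop (nhds z) ∧
        Tendsto (fun k => parabQuot f x w (t k) (zs k)) atTop (nhds (parabSubderiv f x w z))

/-- `φ` is a generalized quadratic form: its domain is a linear subspace and on the domain it is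
given by a symmetric linear operator. -/
def IsGQF (ip : E → E → ℝ) (φ : E → EReal) : Prop :=
  (φ 0 ≠ ⊤) ∧
  (∀ x y : E, φ x ≠ ⊤ → φ y ≠ ⊤ → φ (x + y) ≠ ⊤) ∧
  (∀ (c : ℝ) (x : E), φ x ≠ ⊤ → φ (c • x) ≠ ⊤) ∧
  ∃ L : E → E,
    (∀ x y : E, φ x ≠ ⊤ → φ y ≠ ⊤ → L (x + y) = L x + L y) ∧
    (∀ (c : ℝ) (x : E), φ x ≠ ⊤ → L (c • x) = c • L x) ∧
    (∀ x y : E, φ x ≠ ⊤ → φ y ≠ ⊤ → ip (L x) y = ip x (L y)) ∧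
    (∀ x : E, φ x ≠ ⊤ → φ x = ((ip (L x) x : ℝ) : EReal))

/-- `f` is generalized twice differentiable at `x` for `v`. -/
def GenTwiceDiff (ip : E → E → ℝ) (f : E → EReal) (x v : E) : Prop :=
  TwiceEpiDiff ip f x v ∧ IsGQF ip (subderiv2 ip f x v)

/-- Proto-differentiability of a set-valued map `F` at `x` for `y ∈ F x`. -/
def ProtoDiff (F : E → Set E) (x y : E) : Prop :=
  ∀ w η : E, (w, η) ∈ tangentCone {p : E × E | p.2 ∈ F p.1} (x, y) →
    ∀ t : ℕ → ℝ, (∀ k, 0 < t k) → Tendsto t atTop (nhds 0) →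
      ∃ ws ηs : ℕ → E, Tendsto ws atTop (nhds w) ∧ Tendsto ηs atTop (nhds η) ∧
        ∀ k, y + t k • ηs k ∈ F (x + t k • ws k)

/-- Relative interior of a set (interior relative to its affine hull). -/
def relInterior (C : Set E) : Set E :=
  {y | y ∈ C ∧ ∃ V ∈ nhds y, ∀ z ∈ V, z ∈ affineSpan ℝ C → z ∈ C}

/-- A polyhedral set: the intersection of finitely many closed half-spaces. -/
def IsPolyhedral (ip : E → E → ℝ) (C : Set E) : Prop :=
  ∃ (k : ℕ) (a : Fin k → E) (b : Fin k → ℝ), C = {x | ∀ j : Fin k, ip (a j) x ≤ b j}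

/-- The subdifferential of a convex function. -/
def convexSubdiff (ip : E → E → ℝ) (f : E → EReal) (x : E) : Set E :=
  {v | ∀ z : E, f x + ((ip v (z - x) : ℝ) : EReal) ≤ f z}

/-- The natural inner product on `E × ℝ`. -/
def ipProd (ip : E → E → ℝ) : E × ℝ → E × ℝ → ℝ :=
  fun p q => ip p.1 q.1 + p.2 * q.2

/-- The epigraph of `f`. -/
def epiSet (f : E → EReal) : Set (E × ℝ) :=
  {p | f p.1 ≤ (p.2 : EReal)}

/-- `f` is subdifferentially regular at `x`. -/
def SubdiffRegularAt (ip : E → E → ℝ) (f : E → EReal) (x : E) : Prop :=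
  IsFiniteAt f x ∧
    regNormalCone (ipProd ip) (epiSet f) (x, (f x).toReal) =
      limNormalCone (ipProd ip) (epiSet f) (x, (f x).toReal)

/-! Real-valued versions: semidifferentiability, gradients. -/

/-- `f` is semidifferentiable at `x`. -/
def SemiDiffAt (f : E → ℝ) (x : E) : Prop :=
  ∀ w : E, ∃ d : ℝ,
    Tendsto (fun p : ℝ × E => (p.1)⁻¹ * (f (x + p.1 • p.2) - f x))
      ((nhdsWithin (0 : ℝ) (Set.Ioi 0)) ×ˢ nhds w) (nhds d)

/-- The (real value of the) subderivative of a real-valued function. -/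
noncomputable def dReal (f : E → ℝ) (x w : E) : ℝ :=
  (subderiv (fun y => ((f y : ℝ) : EReal)) x w).toReal

/-- The second-order difference quotient built from the subderivative. -/
noncomputable def sdq2R (f : E → ℝ) (x : E) (t : ℝ) (w : E) : ℝ :=
  (2 / t ^ 2) * (f (x + t • w) - f x - t * dReal f x w)

/-- `f` is twice semidifferentiable at `x`. -/
def TwiceSemiDiffAt (f : E → ℝ) (x : E) : Prop :=
  SemiDiffAt f x ∧
    ∀ w : E, ∃ d : ℝ,
      Tendsto (fun p : ℝ × E => sdq2R f x p.1 p.2)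
        ((nhdsWithin (0 : ℝ) (Set.Ioi 0)) ×ˢ nhds w) (nhds d)

/-- The second semiderivative `d²f(x)(w)` (the liminf; it is the full limit whenever `f` is
twice semidifferentiable at `x`). -/
noncomputable def secondSemiDeriv (f : E → ℝ) (x w : E) : EReal :=
  Filter.liminf (fun p : ℝ × E => ((sdq2R f x p.1 p.2 : ℝ) : EReal))
    ((nhdsWithin (0 : ℝ) (Set.Ioi 0)) ×ˢ nhds w)

/-- `f` is (Fréchet) differentiable at `x` with gradient `g` (w.r.t. inner product `ip`). -/
def HasGradAt (ip : E → E → ℝ) (f : E → ℝ) (x g : E) : Prop :=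
  Tendsto (fun y : E => (nrm ip (y - x))⁻¹ * (f y - f x - ip g (y - x)))
    (nhdsWithin x {x}ᶜ) (nhds 0)

/-- `f` is locally Lipschitz continuous around `x`. -/
def LocLipAt (ip : E → E → ℝ) (f : E → ℝ) (x : E) : Prop :=
  ∃ V ∈ nhds x, ∃ ℓ : ℝ, 0 ≤ ℓ ∧ ∀ a ∈ V, ∀ b ∈ V, |f a - f b| ≤ ℓ * nrm ip (a - b)

/-- `f` is twice differentiable at `x` with gradient map `G` near `x` and second derivative
(the derivative of `G` at `x`) given by the linear map `Dxx`. -/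
def HasSecondDerivAt (ip : E → E → ℝ) (f : E → EReal) (x : E) (G : E → E) (Dxx : E → E) :
    Prop :=
  ∃ V ∈ nhds x, ∃ fr : E → ℝ,
    (∀ z ∈ V, f z = ((fr z : ℝ) : EReal)) ∧
    (∀ z ∈ V, HasGradAt ip fr z (G z)) ∧
    IsLinearMap ℝ Dxx ∧
    Tendsto (fun z : E => (nrm ip (z - x))⁻¹ • (G z - G x - Dxx (z - x)))
      (nhdsWithin x {x}ᶜ) (nhds 0)

/-- `f` is twice differentiable at `x`. -/
def TwiceDiffAt (ip : E → E → ℝ) (f : E → EReal) (x : E) : Prop :=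
  ∃ G Dxx : E → E, HasSecondDerivAt ip f x G Dxx

end Generic

/-! ## Eigenvalues and spectral machinery -/

open scoped Classical in
/-- The eigenvalues of a real symmetric matrix, arranged in nonincreasing order
(junk value `0` if the matrix is not symmetric). -/
noncomputable def eigval {n : ℕ} (X : Matrix (Fin n) (Fin n) ℝ) : Fin n → ℝ :=
  if h : X.IsHermitian then
    fun i => h.eigenvalues (Tuple.sort (fun j => -h.eigenvalues j) i)
  else 0

/-- `Oⁿ(X)`: orthogonal matrices realizing the ordered spectral decomposition of `X`. -/
def eigOrth {n : ℕ} (X : Matrix (Fin n) (Fin n) ℝ) : Set (Matrix (Fin n) (Fin n) ℝ) :=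
  {U | U * Uᵀ = 1 ∧ X = U * Matrix.diagonal (eigval X) * Uᵀ}

open scoped Classical in
/-- The block `α_m` of indices `j` whose eigenvalue `λ_j(X)` equals `λ_i(X)`. -/
noncomputable def blockSet {n : ℕ} (X : Matrix (Fin n) (Fin n) ℝ) (i : Fin n) :
    Finset (Fin n) :=
  Finset.univ.filter fun j => eigval X j = eigval X i

lemma mem_blockSet_self {n : ℕ} (X : Matrix (Fin n) (Fin n) ℝ) (i : Fin n) :
    i ∈ blockSet X i := by
  simp [blockSet]

/-- The increasing enumeration of the block of `i`. -/
noncomputable def blockEmb {n : ℕ} (X : Matrix (Fin n) (Fin n) ℝ) (i : Fin n) :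
    Fin (blockSet X i).card → Fin n :=
  fun a => ((blockSet X i).orderIsoOfFin rfl a : Fin n)

/-- The position of `i` inside its own block. -/
noncomputable def blockIdx {n : ℕ} (X : Matrix (Fin n) (Fin n) ℝ) (i : Fin n) :
    Fin (blockSet X i).card :=
  ((blockSet X i).orderIsoOfFin rfl).symm ⟨i, mem_blockSet_self X i⟩

/-- The principal submatrix of `M` corresponding to the block of `i` (for `X`). -/
noncomputable def blockMat {n : ℕ} (X M : Matrix (Fin n) (Fin n) ℝ) (i : Fin n) :
    Matrix (Fin (blockSet X i).card) (Fin (blockSet X i).card) ℝ :=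
  Matrix.of fun a b => M (blockEmb X i a) (blockEmb X i b)

/-- The directional derivative `λ'(X;H)` of the ordered eigenvalue map, computed through
`U ∈ Oⁿ(X)`: blockwise ordered eigenvalues of `U_{α_m}ᵀ H U_{α_m}`. -/
noncomputable def lambdaDir {n : ℕ} (X U H : Matrix (Fin n) (Fin n) ℝ) : Fin n → ℝ :=
  fun i => eigval (blockMat X (Uᵀ * H * U) i) (blockIdx X i)

open scoped Classical in
/-- The Moore–Penrose pseudoinverse of a square real matrix, characterized by the four
Penrose equations. -/
noncomputable def pinv {n : ℕ} (A : Matrix (Fin n) (Fin n) ℝ) :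
    Matrix (Fin n) (Fin n) ℝ :=
  if h : ∃ B : Matrix (Fin n) (Fin n) ℝ,
      A * B * A = A ∧ B * A * B = B ∧ (A * B)ᵀ = A * B ∧ (B * A)ᵀ = B * A
  then h.choose else 0

/-- The curvature term `2 ∑ₘ ⟨Diag(y)_{αₘαₘ}, U_{αₘ}ᵀ H (μₘ I - X)† H U_{αₘ}⟩`, written as a
single sum over all indices. -/
noncomputable def curvTerm {n : ℕ} (X U H : Matrix (Fin n) (Fin n) ℝ) (y : Fin n → ℝ) : ℝ :=
  2 * ∑ i : Fin n, y i *
    (Uᵀ * (H * pinv (eigval X i • (1 : Matrix (Fin n) (Fin n) ℝ) - X) * H) * U) i i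

/-- Two symmetric matrices admit a simultaneous ordered spectral decomposition. -/
def simOrdSpec {k : ℕ} (A B : Matrix (Fin k) (Fin k) ℝ) : Prop :=
  ∃ P : Matrix (Fin k) (Fin k) ℝ, P * Pᵀ = 1 ∧
    A = P * Matrix.diagonal (eigval A) * Pᵀ ∧
    B = P * Matrix.diagonal (eigval B) * Pᵀ

/-- The subspace of symmetric `n × n` real matrices. -/
def symSubmodule (n : ℕ) : Submodule ℝ (Matrix (Fin n) (Fin n) ℝ) where
  carrier := {A | A.IsSymm}
  add_mem' := by
    intro a b ha hb
    simp only [Set.mem_setOf_eq, Matrix.IsSymm] at *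
    rw [Matrix.transpose_add, ha, hb]
  zero_mem' := by
    simp only [Set.mem_setOf_eq, Matrix.IsSymm, Matrix.transpose_zero]
  smul_mem' := by
    intro c a ha
    simp only [Set.mem_setOf_eq, Matrix.IsSymm] at *
    rw [Matrix.transpose_smul, ha]

/-- The space `Sⁿ` of symmetric `n × n` real matrices. -/
abbrev Sym (n : ℕ) : Type := ↥(symSubmodule n)

/-- The trace inner product `⟨A, B⟩ = tr(AB)` on `Sⁿ`. -/
noncomputable def ipM {n : ℕ} (A B : Sym n) : ℝ :=
  ((A : Matrix (Fin n) (Fin n) ℝ) * (B : Matrix (Fin n) (Fin n) ℝ)).trace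

/-- The Euclidean inner product on `ℝⁿ`. -/
def ipV {n : ℕ} (v w : Fin n → ℝ) : ℝ :=
  ∑ i, v i * w i

/-- The spectral function `g = θ ∘ λ` on `Sⁿ`. -/
noncomputable def specFn {n : ℕ} (θ : (Fin n → ℝ) → EReal) : Sym n → EReal :=
  fun A => θ (eigval (A : Matrix (Fin n) (Fin n) ℝ))

/-- A function on `ℝⁿ` is symmetric (permutation invariant). -/
def SymmetricFn {n : ℕ} {α : Type*} (θ : (Fin n → ℝ) → α) : Prop :=
  ∀ (x : Fin n → ℝ) (σ : Equiv.Perm (Fin n)), θ (fun i => x (σ i)) = θ x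

/-- The diagonal matrix `Diag(w)` as an element of `Sⁿ`. -/
noncomputable def diagSym {n : ℕ} (w : Fin n → ℝ) : Sym n :=
  ⟨Matrix.diagonal w, Matrix.isSymm_diagonal w⟩

/-- The `i`-th order statistic: `orderStat x i` is the `i`-th largest entry of `x`. -/
noncomputable def orderStat {n : ℕ} (x : Fin n → ℝ) : Fin n → ℝ :=
  fun i => x (Tuple.sort (fun j => -x j) i)

/-!
A spectral function is constant along the rotations `e^{tS} X e^{-tS}`, so each of its regular
subgradients at `X` commutes with `X`. Simultaneous diagonalization and a trace inequality for
doubly stochastic matrices then show that `∂g` consists exactly of the pairs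
`(U Diag(x) Uᵀ, U Diag(y) Uᵀ)` with `U` orthogonal and `y ∈ ∂θ(x)`.

Along a sequence in the graph of `∂g`, the joint eigenbasis moves to first order by one rotation
`Q e^{tA}`. Hence a tangent to `gph ∂g` is the velocity of a curve
`Q e^{tA} (Diag(x + t w), Diag(y + t η)) (Q e^{tA})ᵀ`, where `(w, η)` is tangent to `gph ∂θ`. If
`∂θ` is proto-differentiable, conjugating approximants of `(w, η)` by `Q e^{tA}` approximates the
tangent to `gph ∂g`. Conversely, a tangent `(U Diag(w) Uᵀ, U Diag(η) Uᵀ)` commutes with the base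
point, which makes the rotational part of its approximants vanish in the limit; the remaining
diagonal part is, up to a permutation, the required approximation of `(w, η)`.
-/

/-! ## Inner products and regular subgradients -/

section DifferenceQuotients

variable [AddCommGroup E] [Module ℝ E] [TopologicalSpace E] [ContinuousAdd E]
  [ContinuousSMul ℝ E] {ι : Type*} {l : Filter ι} {t : ι → ℝ} {a d : E}

theorem tendsto_add_smul_of_tendsto_zero {ds : ι → E} (ht : Tendsto t l (𝓝 0))
    (hd : Tendsto ds l (𝓝 d)) : Tendsto (fun k => a + t k • ds k) l (𝓝 a) := by
  simpa only [zero_smul, add_zero] using (ht.smul hd).const_add a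

theorem tendsto_of_tendsto_inv_smul_sub {f : ι → E} (ht : Tendsto t l (𝓝[≠] 0))
    (hd : Tendsto (fun k => (t k)⁻¹ • (f k - a)) l (𝓝 d)) : Tendsto f l (𝓝 a) := by
  refine (tendsto_add_smul_of_tendsto_zero (tendsto_nhds_of_tendsto_nhdsWithin ht) hd).congr' ?_
  filter_upwards [ht.eventually eventually_mem_nhdsWithin] with k hk
  rw [smul_inv_smul₀ hk, add_sub_cancel]

end DifferenceQuotients

section InnerProduct

variable [AddCommGroup E] [Module ℝ E]

/-- `ip` is a positive definite symmetric bilinear form, i.e. a real inner product. Being a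
predicate on a bare function, it applies both to `ipV` and to `ipM`. -/
structure IsInnerProduct (ip : E → E → ℝ) : Prop where
  symm : ∀ x y, ip x y = ip y x
  add_left : ∀ x y z, ip (x + y) z = ip x z + ip y z
  smul_left : ∀ (c : ℝ) x y, ip (c • x) y = c * ip x y
  self_nonneg : ∀ x, 0 ≤ ip x x
  eq_zero_of_self_eq_zero : ∀ x, ip x x = 0 → x = 0

namespace IsInnerProduct

variable {ip : E → E → ℝ}

theorem add_right (h : IsInnerProduct ip) (x y z : E) : ip x (y + z) = ip x y + ip x z := by
  rw [h.symm, h.add_left, h.symm y, h.symm z]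

theorem smul_right (h : IsInnerProduct ip) (c : ℝ) (x y : E) : ip x (c • y) = c * ip x y := by
  rw [h.symm, h.smul_left, h.symm]

theorem zero_right (h : IsInnerProduct ip) (x : E) : ip x 0 = 0 := by
  simpa using h.smul_right 0 x 0

theorem sub_right (h : IsInnerProduct ip) (x y z : E) : ip x (y - z) = ip x y - ip x z := by
  rw [eq_sub_iff_add_eq, ← h.add_right, sub_add_cancel]

theorem self_sub (h : IsInnerProduct ip) (x y : E) :
    ip (x - y) (x - y) = ip x x - 2 * ip x y + ip y y := by
  rw [h.sub_right, h.symm _ x, h.symm _ y, h.sub_right, h.sub_right, h.symm y x]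
  ring

theorem nrm_sq (h : IsInnerProduct ip) (x : E) : nrm ip x ^ 2 = ip x x :=
  Real.sq_sqrt (h.self_nonneg x)

theorem nrm_zero (h : IsInnerProduct ip) : nrm ip 0 = 0 := by
  rw [nrm, h.zero_right, Real.sqrt_zero]

theorem nrm_pos (h : IsInnerProduct ip) {x : E} (hx : x ≠ 0) : 0 < nrm ip x :=
  Real.sqrt_pos.2 <| (h.self_nonneg x).lt_of_ne' fun h0 => hx (h.eq_zero_of_self_eq_zero x h0)

theorem nrm_smul (h : IsInnerProduct ip) {c : ℝ} (hc : 0 ≤ c) (x : E) :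
    nrm ip (c • x) = c * nrm ip x := by
  rw [nrm, nrm, h.smul_left, h.smul_right, ← mul_assoc, Real.sqrt_mul (mul_self_nonneg c),
    Real.sqrt_mul_self hc]

theorem abs_le_nrm_mul_nrm (h : IsInnerProduct ip) (x y : E) :
    |ip x y| ≤ nrm ip x * nrm ip y := by
  let core : PreInnerProductSpace.Core ℝ E :=
    { inner := ip
      conj_inner_symm := fun x y => h.symm y x
      re_inner_nonneg := h.self_nonneg
      add_left := h.add_left
      smul_left := fun x y c => h.smul_left c x y }
  rw [nrm, nrm, ← Real.sqrt_mul (h.self_nonneg x)]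
  refine Real.abs_le_sqrt ?_
  have := InnerProductSpace.Core.inner_mul_inner_self_le (c := core) x y
  change |ip x y| * |ip y x| ≤ ip x x * ip y y at this
  rwa [h.symm y x, abs_mul_abs_self, ← sq] at this

theorem neg_le_diffQuot_iff (h : IsInnerProduct ip) {f : E → EReal} {x y v : E}
    (hfin : IsFiniteAt f x) (hyx : y ≠ x) (ε : ℝ) :
    ((-ε : ℝ) : EReal) ≤ (((nrm ip (y - x))⁻¹ : ℝ) : EReal) *
        (f y - f x - ((ip v (y - x) : ℝ) : EReal)) ↔
      f x + ((ip v (y - x) - ε * nrm ip (y - x) : ℝ) : EReal) ≤ f y := by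
  have hpos : 0 < nrm ip (y - x) := h.nrm_pos (sub_ne_zero.2 hyx)
  lift f x to ℝ using hfin with r
  induction f y with
  | bot =>
    rw [EReal.bot_sub, EReal.bot_sub, EReal.coe_mul_bot_of_pos (inv_pos.2 hpos), ← EReal.coe_add]
    simp only [le_bot_iff, EReal.coe_ne_bot]
  | top =>
    rw [EReal.top_sub_coe, EReal.top_sub_coe, EReal.coe_mul_top_of_pos (inv_pos.2 hpos)]
    simp only [le_top]
  | coe s =>
    norm_cast
    rw [inv_mul_eq_div, le_div_iff₀ hpos]
    constructor <;> intro <;> linarith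

theorem regSubgrad_iff [TopologicalSpace E] (h : IsInnerProduct ip) {f : E → EReal} {x v : E} :
    RegSubgrad ip f x v ↔ IsFiniteAt f x ∧ ∀ ε > (0 : ℝ), ∀ᶠ y in 𝓝 x,
      f x + ((ip v (y - x) - ε * nrm ip (y - x) : ℝ) : EReal) ≤ f y := by
  refine and_congr_right fun hfin => ⟨fun hlim ε hε => ?_, fun hev => ?_⟩
  · have hneg : ((-ε : ℝ) : EReal) < 0 := mod_cast neg_neg_of_pos hε
    have hlt := eventually_nhdsWithin_iff.1 (eventually_lt_of_lt_liminf (hneg.trans_le hlim))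
    filter_upwards [hlt] with y hy
    rcases eq_or_ne y x with rfl | hyx
    · simp [h.nrm_zero, h.zero_right]
    · exact (h.neg_le_diffQuot_iff hfin hyx ε).1 (hy hyx).le
  · refine le_of_forall_lt fun c hc => ?_
    obtain ⟨c', hcc', hc'⟩ := EReal.lt_iff_exists_real_btwn.1 hc
    have hε : 0 < -c' := neg_pos.2 (mod_cast hc')
    refine hcc'.trans_le (le_liminf_of_le (by isBoundedDefault) ?_)
    rw [eventually_nhdsWithin_iff]
    filter_upwards [hev (-c') hε] with y hy hyx
    simpa using (h.neg_le_diffQuot_iff hfin hyx (-c')).2 hy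

theorem nonpos_of_regSubgrad_of_curve [TopologicalSpace E] [ContinuousAdd E]
    [ContinuousSMul ℝ E] (h : IsInnerProduct ip)
    (hcont : Continuous fun p : E × E => ip p.1 p.2) {f : E → EReal} {x v d : E}
    (hv : RegSubgrad ip f x v) {γ : ℝ → E}
    (hd : Tendsto (fun t => t⁻¹ • (γ t - x)) (𝓝[>] 0) (𝓝 d))
    (hlevel : ∀ t, f (γ t) = f x) : ip v d ≤ 0 := by
  obtain ⟨hfin, hreg⟩ := h.regSubgrad_iff.1 hv
  have hγ : Tendsto γ (𝓝[>] 0) (𝓝 x) := tendsto_of_tendsto_inv_smul_sub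
    (tendsto_id.mono_right (nhdsGT_le_nhdsNE 0)) hd
  have hip : Tendsto (fun t : ℝ => ip v (t⁻¹ • (γ t - x))) (𝓝[>] 0) (𝓝 (ip v d)) :=
    (hcont.tendsto (v, d)).comp (tendsto_const_nhds.prodMk_nhds hd)
  have hnrm : Tendsto (fun t : ℝ => nrm ip (t⁻¹ • (γ t - x))) (𝓝[>] 0) (𝓝 (nrm ip d)) :=
    (Real.continuous_sqrt.tendsto _).comp ((hcont.tendsto (d, d)).comp (hd.prodMk_nhds hd))
  have hbound : ∀ ε > (0 : ℝ), ip v d ≤ ε * nrm ip d := fun ε hε => by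
    refine le_of_tendsto_of_tendsto hip (hnrm.const_mul ε) ?_
    filter_upwards [hγ.eventually (hreg ε hε), self_mem_nhdsWithin] with t ht htpos
    have ht0 : (0 : ℝ) ≤ t⁻¹ := inv_nonneg.2 (le_of_lt htpos)
    rw [hlevel] at ht
    lift f x to ℝ using hfin with r
    have hle : ip v (γ t - x) ≤ ε * nrm ip (γ t - x) := by
      have : r + (ip v (γ t - x) - ε * nrm ip (γ t - x)) ≤ r := mod_cast ht
      linarith
    calc ip v (t⁻¹ • (γ t - x)) = t⁻¹ * ip v (γ t - x) := h.smul_right ..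
      _ ≤ t⁻¹ * (ε * nrm ip (γ t - x)) := mul_le_mul_of_nonneg_left hle ht0
      _ = ε * nrm ip (t⁻¹ • (γ t - x)) := by rw [h.nrm_smul ht0]; ring
  have hzero : Tendsto (fun ε : ℝ => ε * nrm ip d) (𝓝[>] 0) (𝓝 0) :=
    ((continuous_mul_const (nrm ip d)).tendsto' 0 0 (zero_mul _)).mono_left nhdsWithin_le_nhds
  exact ge_of_tendsto hzero (eventually_mem_nhdsWithin.mono hbound)

end IsInnerProduct

end InnerProduct

theorem isInnerProduct_ipV (n : ℕ) : IsInnerProduct (ipV (n := n)) where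
  symm x y := dotProduct_comm x y
  add_left x y z := add_dotProduct x y z
  smul_left c x y := smul_dotProduct c x y
  self_nonneg _ := Finset.sum_nonneg fun _ _ => mul_self_nonneg _
  eq_zero_of_self_eq_zero _ hx := dotProduct_self_eq_zero.1 hx

theorem isInnerProduct_ipM (n : ℕ) : IsInnerProduct (ipM (n := n)) where
  symm A B := Matrix.trace_mul_comm _ _
  add_left A B C := by simp only [ipM, Submodule.coe_add, Matrix.add_mul, Matrix.trace_add]
  smul_left c A B := by
    simp only [ipM, Submodule.coe_smul, Matrix.smul_mul, Matrix.trace_smul, smul_eq_mul]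
  self_nonneg A := by
    have hA : (A : Matrix (Fin n) (Fin n) ℝ)ᴴ = A := A.2
    rw [ipM]
    nth_rw 1 [← hA]
    exact (Matrix.posSemidef_conjTranspose_mul_self _).trace_nonneg
  eq_zero_of_self_eq_zero A h0 := by
    have hA : (A : Matrix (Fin n) (Fin n) ℝ)ᴴ = A := A.2
    rw [ipM] at h0
    nth_rw 1 [← hA] at h0
    exact Subtype.ext (Matrix.trace_conjTranspose_mul_self_eq_zero_iff.1 h0)

theorem continuous_ipM (n : ℕ) : Continuous fun p : Sym n × Sym n => ipM p.1 p.2 := by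
  unfold ipM
  fun_prop

theorem norm_le_nrm_ipV {n : ℕ} (x : Fin n → ℝ) : ‖x‖ ≤ nrm ipV x := by
  refine (pi_norm_le_iff_of_nonneg (Real.sqrt_nonneg _)).2 fun i => Real.abs_le_sqrt ?_
  rw [sq]
  exact Finset.single_le_sum (f := fun i => x i * x i) (fun _ _ => mul_self_nonneg _)
    (Finset.mem_univ i)

/-! ## Diagonalization of symmetric matrices -/

section Orthogonal

variable {m : Type*} [Fintype m] [DecidableEq m]

theorem transpose_mem_orthogonalGroup {U : Matrix m m ℝ} (hU : U ∈ orthogonalGroup m ℝ) :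
    Uᵀ ∈ orthogonalGroup m ℝ :=
  (mem_orthogonalGroup_iff m ℝ).2 <| by
    rw [transpose_transpose, (mem_orthogonalGroup_iff' m ℝ).1 hU]

theorem det_ne_zero_of_mem_orthogonalGroup {U : Matrix m m ℝ} (hU : U ∈ orthogonalGroup m ℝ) :
    U.det ≠ 0 :=
  det_ne_zero_of_right_inverse ((mem_orthogonalGroup_iff m ℝ).1 hU)

theorem submatrix_mem_orthogonalGroup {U : Matrix m m ℝ} (hU : U ∈ orthogonalGroup m ℝ)
    (σ : Equiv.Perm m) : U.submatrix id σ ∈ orthogonalGroup m ℝ := by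
  rw [mem_orthogonalGroup_iff] at hU ⊢
  rw [transpose_submatrix, submatrix_mul_equiv, hU, submatrix_id_id]

theorem isCompact_orthogonalGroup : IsCompact (orthogonalGroup m ℝ : Set (Matrix m m ℝ)) := by
  have hclosed : IsClosed (orthogonalGroup m ℝ : Set (Matrix m m ℝ)) := by
    have : (orthogonalGroup m ℝ : Set (Matrix m m ℝ)) = {U | U * Uᵀ = 1} :=
      Set.ext fun U => mem_orthogonalGroup_iff m ℝ
    rw [this]
    exact isClosed_eq (by fun_prop) continuous_const
  refine (isCompact_univ_pi fun _ => isCompact_univ_pi fun _ =>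
    isCompact_Icc (a := (-1 : ℝ)) (b := 1)).of_isClosed_subset hclosed fun U hU i _ j _ => ?_
  exact abs_le.1 (entry_norm_bound_of_unitary (𝕜 := ℝ) hU i j)

theorem exists_perm_forall_ne_zero_of_det_ne_zero {R : Type*} [CommRing R] {A : Matrix m m R}
    (hA : A.det ≠ 0) : ∃ σ : Equiv.Perm m, ∀ j, A (σ j) j ≠ 0 := by
  rw [det_apply] at hA
  obtain ⟨σ, -, hσ⟩ := Finset.exists_ne_zero_of_sum_ne_zero hA
  refine ⟨σ, fun j hj => hσ ?_⟩
  rw [Finset.prod_eq_zero (f := fun i => A (σ i) i) (Finset.mem_univ j) hj, smul_zero]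

theorem exists_perm_forall_comp_eq_of_det_ne_zero {R : Type*} [CommRing R] [IsDomain R]
    {A : Matrix m m R} (hA : A.det ≠ 0) :
    ∃ σ : Equiv.Perm m, ∀ a b : m → R, diagonal a * A = A * diagonal b → a ∘ σ = b := by
  obtain ⟨σ, hσ⟩ := exists_perm_forall_ne_zero_of_det_ne_zero hA
  refine ⟨σ, fun a b hab => funext fun j => mul_left_cancel₀ (hσ j) ?_⟩
  have := congrFun (congrFun hab (σ j)) j
  rwa [diagonal_mul, mul_diagonal, mul_comm] at this

theorem exists_perm_sum_mul_le_of_mem_doublyStochastic {S : Matrix m m ℝ}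
    (hS : S ∈ doublyStochastic ℝ m) (M : Matrix m m ℝ) :
    ∃ σ : Equiv.Perm m, ∑ i, ∑ j, S i j * M i j ≤ ∑ i, M i (σ i) := by
  let φ : Matrix m m ℝ →ₗ[ℝ] ℝ := ∑ i, ∑ j, M i j • entryLinearMap ℝ ℝ i j
  have hφ : ∀ T, φ T = ∑ i, ∑ j, T i j * M i j := fun T => by
    simp [φ, LinearMap.sum_apply, mul_comm]
  have hconv : ConvexOn ℝ (convexHull ℝ {σ.permMatrix ℝ | σ : Equiv.Perm m}) φ :=
    φ.convexOn (convex_convexHull ..)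
  rw [← SetLike.mem_coe, doublyStochastic_eq_convexHull_permMatrix] at hS
  obtain ⟨_, ⟨σ, rfl⟩, hσ⟩ := hconv.exists_ge_of_mem_convexHull (subset_convexHull ..) hS
  refine ⟨σ, ?_⟩
  rw [hφ, hφ] at hσ
  simpa [Equiv.Perm.permMatrix, PEquiv.toMatrix_apply] using hσ

theorem sq_entries_mem_doublyStochastic {U : Matrix m m ℝ} (hU : U ∈ orthogonalGroup m ℝ) :
    (Matrix.of fun i j => U i j ^ 2) ∈ doublyStochastic ℝ m := by
  rw [mem_doublyStochastic_iff_sum]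
  refine ⟨fun _ _ => sq_nonneg _, fun i => ?_, fun j => ?_⟩
  · simpa [mul_apply, sq] using congrFun (congrFun ((mem_orthogonalGroup_iff m ℝ).1 hU) i) i
  · simpa [mul_apply, sq] using congrFun (congrFun ((mem_orthogonalGroup_iff' m ℝ).1 hU) j) j

theorem commute_conj_iff {Q M N : Matrix m m ℝ} (hQ : Q ∈ orthogonalGroup m ℝ) :
    Commute (Q * M * Qᵀ) (Q * N * Qᵀ) ↔ Commute M N :=
  commute_map_iff (f := Unitary.conjStarAlgAut ℝ (Matrix m m ℝ) ⟨Q, hQ⟩)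
    (Unitary.conjStarAlgAut ℝ _ _).injective

end Orthogonal

theorem exists_orthonormalBasis_eigenvectors_of_commute {𝕜 V : Type*} [RCLike 𝕜]
    [NormedAddCommGroup V] [InnerProductSpace 𝕜 V] [FiniteDimensional 𝕜 V] {n : ℕ}
    (hn : Module.finrank 𝕜 V = n) {S T : V →ₗ[𝕜] V} (hS : S.IsSymmetric) (hT : T.IsSymmetric)
    (hST : Commute S T) :
    ∃ (b : OrthonormalBasis (Fin n) 𝕜 V) (μ ν : Fin n → 𝕜),
      ∀ i, S (b i) = μ i • b i ∧ T (b i) = ν i • b i := by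
  classical
  have hint := hS.directSum_isInternal_of_commute hT hST
  have hint' := DirectSum.isInternal_ne_bot_iff.2 hint
  have := hint.submodule_iSupIndep.fintypeNeBotOfFiniteDimensional
  have horth := (hS.orthogonalFamily_eigenspace_inf_eigenspace hT).comp
    (Subtype.val_injective (p := fun i : 𝕜 × 𝕜 =>
      Module.End.eigenspace S i.2 ⊓ Module.End.eigenspace T i.1 ≠ ⊥))
  refine ⟨hint'.subordinateOrthonormalBasis hn horth,
    fun i => (hint'.subordinateOrthonormalBasisIndex hn i horth).1.2,
    fun i => (hint'.subordinateOrthonormalBasisIndex hn i horth).1.1, fun i => ?_⟩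
  have hmem := hint'.subordinateOrthonormalBasis_subordinate hn i horth
  exact ⟨Module.End.mem_eigenspace_iff.1 hmem.1, Module.End.mem_eigenspace_iff.1 hmem.2⟩

section ConjDiag

variable {n : ℕ}

/-- The symmetric matrix `U Diag(x) Uᵀ`, as a linear map in `x`. -/
def conjDiag (U : Matrix (Fin n) (Fin n) ℝ) : (Fin n → ℝ) →ₗ[ℝ] Sym n where
  toFun x := ⟨U * diagonal x * Uᵀ, by simp [symSubmodule, IsSymm, Matrix.mul_assoc]⟩
  map_add' x y := Subtype.ext <| by
    simp [← diagonal_add, Matrix.mul_add, Matrix.add_mul, Pi.add_def]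
  map_smul' c x := Subtype.ext <| by simp [diagonal_smul]

theorem coe_conjDiag (U : Matrix (Fin n) (Fin n) ℝ) (x : Fin n → ℝ) :
    (conjDiag U x : Matrix (Fin n) (Fin n) ℝ) = U * diagonal x * Uᵀ :=
  rfl

theorem tendsto_conjDiag {ι : Type*} {l : Filter ι} {Us : ι → Matrix (Fin n) (Fin n) ℝ}
    {xs : ι → Fin n → ℝ} {U : Matrix (Fin n) (Fin n) ℝ} {x : Fin n → ℝ}
    (hU : Tendsto Us l (𝓝 U)) (hx : Tendsto xs l (𝓝 x)) :
    Tendsto (fun k => conjDiag (Us k) (xs k)) l (𝓝 (conjDiag U x)) :=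
  tendsto_subtype_rng.2 <| (hU.mul ((continuous_id.matrix_diagonal.tendsto x).comp hx)).mul
    ((continuous_id.matrix_transpose.tendsto U).comp hU)

theorem conjDiag_submatrix (U : Matrix (Fin n) (Fin n) ℝ) (σ : Equiv.Perm (Fin n))
    (x : Fin n → ℝ) : conjDiag (U.submatrix id σ) (x ∘ σ) = conjDiag U x :=
  Subtype.ext <| by
    rw [coe_conjDiag, ← submatrix_diagonal_equiv, submatrix_mul_equiv, transpose_submatrix,
      submatrix_mul_equiv, submatrix_id_id, coe_conjDiag]

theorem diagonal_mul_eq_mul_diagonal_of_conjDiag_eq {U V : Matrix (Fin n) (Fin n) ℝ}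
    (hU : U ∈ orthogonalGroup (Fin n) ℝ) (hV : V ∈ orthogonalGroup (Fin n) ℝ) {a b : Fin n → ℝ}
    (hab : conjDiag U a = conjDiag V b) : diagonal a * (Uᵀ * V) = Uᵀ * V * diagonal b := by
  rw [mem_orthogonalGroup_iff'] at hU hV
  have hmat : U * diagonal a * Uᵀ = V * diagonal b * Vᵀ := congrArg Subtype.val hab
  calc diagonal a * (Uᵀ * V) = Uᵀ * U * diagonal a * (Uᵀ * V) := by rw [hU, Matrix.one_mul]
    _ = Uᵀ * (U * diagonal a * Uᵀ) * V := by simp only [Matrix.mul_assoc]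
    _ = Uᵀ * (V * diagonal b * Vᵀ) * V := by rw [hmat]
    _ = Uᵀ * V * diagonal b * (Vᵀ * V) := by simp only [Matrix.mul_assoc]
    _ = Uᵀ * V * diagonal b := by rw [hV, Matrix.mul_one]

theorem exists_perm_forall_comp_eq_of_conjDiag_eq {U V : Matrix (Fin n) (Fin n) ℝ}
    (hU : U ∈ orthogonalGroup (Fin n) ℝ) (hV : V ∈ orthogonalGroup (Fin n) ℝ) :
    ∃ σ : Equiv.Perm (Fin n), ∀ a b, conjDiag U a = conjDiag V b → a ∘ σ = b := by
  obtain ⟨σ, hσ⟩ := exists_perm_forall_comp_eq_of_det_ne_zero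
    (det_ne_zero_of_mem_orthogonalGroup (mul_mem (transpose_mem_orthogonalGroup hU) hV))
  exact ⟨σ, fun a b hab => hσ a b (diagonal_mul_eq_mul_diagonal_of_conjDiag_eq hU hV hab)⟩

theorem isHermitian_coe (A : Sym n) : (A : Matrix (Fin n) (Fin n) ℝ).IsHermitian :=
  A.2

theorem exists_eq_conjDiag_eigval (A : Sym n) :
    ∃ P ∈ orthogonalGroup (Fin n) ℝ, A = conjDiag P (eigval A.1) := by
  have hA := isHermitian_coe A
  let V : Matrix (Fin n) (Fin n) ℝ := hA.eigenvectorUnitary.1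
  have hV : V ∈ orthogonalGroup (Fin n) ℝ := hA.eigenvectorUnitary.2
  have hAV : A = conjDiag V hA.eigenvalues := Subtype.ext hA.spectral_theorem
  let σ := Tuple.sort fun j => -hA.eigenvalues j
  have hσ : eigval A.1 = hA.eigenvalues ∘ σ := dif_pos hA
  exact ⟨V.submatrix id σ, submatrix_mem_orthogonalGroup hV σ, by
    rw [hσ, conjDiag_submatrix, ← hAV]⟩

theorem specFn_conjDiag {θ : (Fin n → ℝ) → EReal} (hθ : SymmetricFn θ)
    {U : Matrix (Fin n) (Fin n) ℝ} (hU : U ∈ orthogonalGroup (Fin n) ℝ) (x : Fin n → ℝ) :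
    specFn θ (conjDiag U x) = θ x := by
  obtain ⟨P, hP, hUP⟩ := exists_eq_conjDiag_eigval (conjDiag U x)
  obtain ⟨σ, hσ⟩ := exists_perm_forall_comp_eq_of_conjDiag_eq hU hP
  rw [specFn, ← hσ _ _ hUP]
  exact hθ x σ

theorem eq_conjDiag_of_forall_toEuclideanLin_eq
    (b : OrthonormalBasis (Fin n) ℝ (EuclideanSpace ℝ (Fin n))) {A : Sym n} {c : Fin n → ℝ}
    (hc : ∀ j, toEuclideanLin A.1 (b j) = c j • b j) :
    A = conjDiag ((EuclideanSpace.basisFun (Fin n) ℝ).toBasis.toMatrix b) c := by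
  set P := (EuclideanSpace.basisFun (Fin n) ℝ).toBasis.toMatrix b
  have hAP : A.1 * P = P * diagonal c := by
    ext i j
    have hij := congrArg (fun v : EuclideanSpace ℝ (Fin n) => v i) (hc j)
    rw [mul_diagonal, mul_comm]
    exact hij
  have hP : P * Pᵀ = 1 := (mem_orthogonalGroup_iff (Fin n) ℝ).1
    ((EuclideanSpace.basisFun (Fin n) ℝ).toMatrix_orthonormalBasis_mem_orthogonal b)
  exact Subtype.ext <| by rw [coe_conjDiag, ← hAP, Matrix.mul_assoc, hP, Matrix.mul_one]

theorem exists_eq_conjDiag_of_commute {A B : Sym n} (hAB : Commute A.1 B.1) :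
    ∃ P ∈ orthogonalGroup (Fin n) ℝ, ∃ a b, A = conjDiag P a ∧ B = conjDiag P b := by
  have hcomm : Commute (toEuclideanLin A.1) (toEuclideanLin B.1) :=
    hAB.map (toLpLinAlgEquiv (R := ℝ) (n := Fin n) 2)
  obtain ⟨b, μ, ν, hb⟩ := exists_orthonormalBasis_eigenvectors_of_commute
    (finrank_euclideanSpace_fin (𝕜 := ℝ) (n := n))
    (isSymmetric_toEuclideanLin_iff.2 (isHermitian_coe A))
    (isSymmetric_toEuclideanLin_iff.2 (isHermitian_coe B)) hcomm
  exact ⟨_, (EuclideanSpace.basisFun (Fin n) ℝ).toMatrix_orthonormalBasis_mem_orthogonal b, μ, ν,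
    eq_conjDiag_of_forall_toEuclideanLin_eq b fun j => (hb j).1,
    eq_conjDiag_of_forall_toEuclideanLin_eq b fun j => (hb j).2⟩

theorem ipM_conjDiag (U P : Matrix (Fin n) (Fin n) ℝ) (a b : Fin n → ℝ) :
    ipM (conjDiag U a) (conjDiag P b) = ∑ i, ∑ j, (Uᵀ * P) i j ^ 2 * (a i * b j) := by
  have htrace : ipM (conjDiag U a) (conjDiag P b) =
      (diagonal a * (Uᵀ * P) * (diagonal b * (Uᵀ * P)ᵀ)).trace := by
    rw [ipM, coe_conjDiag, coe_conjDiag, transpose_mul, transpose_transpose, Matrix.mul_assoc U,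
      Matrix.mul_assoc U, trace_mul_comm U]
    simp only [Matrix.mul_assoc]
  rw [htrace, Matrix.trace]
  refine Finset.sum_congr rfl fun i _ => ?_
  rw [diag_apply, mul_apply]
  refine Finset.sum_congr rfl fun j _ => ?_
  rw [diagonal_mul, diagonal_mul, transpose_apply]
  ring

theorem ipM_conjDiag_self {U : Matrix (Fin n) (Fin n) ℝ} (hU : U ∈ orthogonalGroup (Fin n) ℝ)
    (a b : Fin n → ℝ) : ipM (conjDiag U a) (conjDiag U b) = ipV a b := by
  rw [ipM_conjDiag, (mem_orthogonalGroup_iff' (Fin n) ℝ).1 hU]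
  simp [ipV, one_apply, ite_pow]

theorem nrm_conjDiag {U : Matrix (Fin n) (Fin n) ℝ} (hU : U ∈ orthogonalGroup (Fin n) ℝ)
    (a : Fin n → ℝ) : nrm ipM (conjDiag U a) = nrm ipV a := by
  rw [nrm, nrm, ipM_conjDiag_self hU]

end ConjDiag

/-! ## Subgradients of spectral functions -/

section SpectralSubgradients

variable {n : ℕ} {θ : (Fin n → ℝ) → EReal} {U P : Matrix (Fin n) (Fin n) ℝ}

theorem sum_sum_sq_mul_left {R : Matrix (Fin n) (Fin n) ℝ} (hR : R ∈ orthogonalGroup (Fin n) ℝ)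
    (a : Fin n → ℝ) : ∑ i, ∑ j, R i j ^ 2 * a i = ∑ i, a i := by
  have hrow : ∀ i, ∑ j, R i j ^ 2 = 1 :=
    (mem_doublyStochastic_iff_sum.1 (sq_entries_mem_doublyStochastic hR)).2.1
  simp only [← Finset.sum_mul, hrow, one_mul]

theorem sum_sum_sq_mul_right {R : Matrix (Fin n) (Fin n) ℝ} (hR : R ∈ orthogonalGroup (Fin n) ℝ)
    (a : Fin n → ℝ) : ∑ i, ∑ j, R i j ^ 2 * a j = ∑ j, a j := by
  rw [Finset.sum_comm]
  exact sum_sum_sq_mul_left (transpose_mem_orthogonalGroup hR) a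

theorem ipM_conjDiag_conjDiag_sub (hU : U ∈ orthogonalGroup (Fin n) ℝ)
    (hP : P ∈ orthogonalGroup (Fin n) ℝ) (v x z : Fin n → ℝ) :
    ipM (conjDiag U v) (conjDiag P z - conjDiag U x) =
      ∑ i, ∑ j, (Uᵀ * P) i j ^ 2 * (v i * (z j - x i)) := by
  have hR := mul_mem (transpose_mem_orthogonalGroup hU) hP
  rw [(isInnerProduct_ipM n).sub_right, ipM_conjDiag, ipM_conjDiag_self hU, ipV,
    ← sum_sum_sq_mul_left hR fun i => v i * x i]
  simp only [mul_sub, Finset.sum_sub_distrib]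

theorem ipM_self_conjDiag_sub (hU : U ∈ orthogonalGroup (Fin n) ℝ)
    (hP : P ∈ orthogonalGroup (Fin n) ℝ) (x z : Fin n → ℝ) :
    ipM (conjDiag P z - conjDiag U x) (conjDiag P z - conjDiag U x) =
      ∑ i, ∑ j, (Uᵀ * P) i j ^ 2 * (z j - x i) ^ 2 := by
  have hM := isInnerProduct_ipM n
  have hR := mul_mem (transpose_mem_orthogonalGroup hU) hP
  rw [hM.self_sub, hM.symm (conjDiag P z) (conjDiag U x), ipM_conjDiag_self hU,
    ipM_conjDiag_self hP, ipM_conjDiag, ipV, ipV, ← sum_sum_sq_mul_left hR fun i => x i * x i,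
    ← sum_sum_sq_mul_right hR fun i => z i * z i]
  simp only [Finset.mul_sum, ← Finset.sum_sub_distrib, ← Finset.sum_add_distrib]
  exact Finset.sum_congr rfl fun i _ => Finset.sum_congr rfl fun j _ => by ring

/-- By Birkhoff's theorem: both sides are values of one linear functional, at a doubly stochastic
matrix and at a permutation matrix. -/
theorem exists_perm_ipM_sub_le (hU : U ∈ orthogonalGroup (Fin n) ℝ)
    (hP : P ∈ orthogonalGroup (Fin n) ℝ) (v x z : Fin n → ℝ) (K : ℝ) :
    ∃ σ : Equiv.Perm (Fin n),
      ipM (conjDiag U v) (conjDiag P z - conjDiag U x) -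
          K * nrm ipM (conjDiag P z - conjDiag U x) ^ 2 ≤
        ipV v (z ∘ σ - x) - K * nrm ipV (z ∘ σ - x) ^ 2 := by
  obtain ⟨σ, hσ⟩ := exists_perm_sum_mul_le_of_mem_doublyStochastic
    (sq_entries_mem_doublyStochastic (mul_mem (transpose_mem_orthogonalGroup hU) hP))
    (Matrix.of fun i j => v i * (z j - x i) - K * (z j - x i) ^ 2)
  refine ⟨σ, ?_⟩
  rw [(isInnerProduct_ipM n).nrm_sq, (isInnerProduct_ipV n).nrm_sq,
    ipM_conjDiag_conjDiag_sub hU hP, ipM_self_conjDiag_sub hU hP]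
  simp only [of_apply, mul_sub (_ ^ 2), Finset.sum_sub_distrib, mul_left_comm _ K,
    ← Finset.mul_sum] at hσ
  simpa only [ipV, Pi.sub_apply, Function.comp_apply, ← sq] using hσ

/-- Taking `K = ε / ‖Z - X‖` in `exists_perm_ipM_sub_le` controls both the distance of the matched
eigenvalues and the loss in the subgradient inequality. -/
theorem exists_perm_nrm_le_and_ipM_sub_le (hU : U ∈ orthogonalGroup (Fin n) ℝ)
    (hP : P ∈ orthogonalGroup (Fin n) ℝ) (v x z : Fin n → ℝ) {ε : ℝ} (hε : 0 < ε) :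
    ∃ σ : Equiv.Perm (Fin n),
      ε * nrm ipV (z ∘ σ - x) ≤
          (nrm ipV v + ε) * nrm ipM (conjDiag P z - conjDiag U x) ∧
        ipM (conjDiag U v) (conjDiag P z - conjDiag U x) -
            2 * ε * nrm ipM (conjDiag P z - conjDiag U x) ≤
          ipV v (z ∘ σ - x) - ε * nrm ipV (z ∘ σ - x) := by
  have hM := isInnerProduct_ipM n
  have hV := isInnerProduct_ipV n
  rcases eq_or_ne (conjDiag P z) (conjDiag U x) with heq | hne
  · obtain ⟨σ, hσ⟩ := exists_perm_forall_comp_eq_of_conjDiag_eq hP hU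
    refine ⟨σ, ?_⟩
    simp [hσ _ _ heq, heq, hM.nrm_zero, hV.nrm_zero, hM.zero_right, hV.zero_right]
  have hh : 0 < nrm ipM (conjDiag P z - conjDiag U x) := hM.nrm_pos (sub_ne_zero.2 hne)
  obtain ⟨σ, hσ⟩ := exists_perm_ipM_sub_le hU hP v x z
    (ε / nrm ipM (conjDiag P z - conjDiag U x))
  refine ⟨σ, ?_⟩
  have hL := (abs_le.1 (hM.abs_le_nrm_mul_nrm (conjDiag U v) (conjDiag P z - conjDiag U x))).1
  have hl := (abs_le.1 (hV.abs_le_nrm_mul_nrm v (z ∘ σ - x))).2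
  have hd : 0 ≤ nrm ipV (z ∘ σ - x) := Real.sqrt_nonneg _
  rw [nrm_conjDiag hU] at hL
  generalize nrm ipM (conjDiag P z - conjDiag U x) = h at *
  generalize nrm ipV (z ∘ σ - x) = d at *
  have hquot : (ε / h * d ^ 2) * h = ε * d ^ 2 := by field_simp
  have hσ' : ε * d ^ 2 ≤ (ipV v (z ∘ σ - x) -
      ipM (conjDiag U v) (conjDiag P z - conjDiag U x) + ε * h) * h := by
    rw [← hquot]
    refine mul_le_mul_of_nonneg_right ?_ hh.le
    have : ε / h * h ^ 2 = ε * h := by field_simp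
    linarith
  constructor
  · have : (ε * d - (nrm ipV v + ε) * h) * (d + h) ≤ 0 := by nlinarith
    nlinarith
  · refine le_of_mul_le_mul_right ?_ hh
    nlinarith [mul_nonneg hε.le (sq_nonneg (d - h)), mul_nonneg hε.le (mul_nonneg hd hh.le)]

theorem tendsto_nrm_ipM_sub (X : Sym n) :
    Tendsto (fun Z => nrm ipM (Z - X)) (𝓝 X) (𝓝 0) := by
  have hcont : Continuous fun Z => nrm ipM (Z - X) := Real.continuous_sqrt.comp <|
    (continuous_ipM n).comp <| (continuous_sub_right X).prodMk (continuous_sub_right X)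
  exact hcont.tendsto' X 0 (by rw [sub_self, (isInnerProduct_ipM n).nrm_zero])

theorem regSubgrad_specFn_conjDiag (hθ : SymmetricFn θ) (hU : U ∈ orthogonalGroup (Fin n) ℝ)
    {x v : Fin n → ℝ} (hv : RegSubgrad ipV θ x v) :
    RegSubgrad ipM (specFn θ) (conjDiag U x) (conjDiag U v) := by
  obtain ⟨hfin, hreg⟩ := (isInnerProduct_ipV n).regSubgrad_iff.1 hv
  refine (isInnerProduct_ipM n).regSubgrad_iff.2 ⟨?_, fun ε hε => ?_⟩
  · rwa [IsFiniteAt, specFn_conjDiag hθ hU]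
  obtain ⟨δ, hδ, hball⟩ := Metric.eventually_nhds_iff.1 (hreg (ε / 2) (half_pos hε))
  have hsmall : ∀ᶠ Z in 𝓝 (conjDiag U x),
      (nrm ipV v + ε / 2) * nrm ipM (Z - conjDiag U x) < ε / 2 * δ :=
    ((tendsto_nrm_ipM_sub _).const_mul _).eventually_lt_const (by rw [mul_zero]; positivity)
  filter_upwards [hsmall] with Z hZ
  obtain ⟨P, hP, hZP⟩ := exists_eq_conjDiag_eigval Z
  set z := eigval Z.1
  rw [hZP] at hZ ⊢
  obtain ⟨σ, hdist, hle⟩ := exists_perm_nrm_le_and_ipM_sub_le hU hP v x z (half_pos hε)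
  have hmem : dist (z ∘ σ) x < δ := by
    rw [dist_eq_norm]
    exact (norm_le_nrm_ipV _).trans_lt
      (lt_of_mul_lt_mul_left (hdist.trans_lt hZ) (half_pos hε).le)
  rw [mul_div_cancel₀ ε two_ne_zero] at hle
  calc _ = θ x + ((ipM (conjDiag U v) (conjDiag P z - conjDiag U x) -
          ε * nrm ipM (conjDiag P z - conjDiag U x) : ℝ) : EReal) := by
        rw [specFn_conjDiag hθ hU]
    _ ≤ θ x + ((ipV v (z ∘ σ - x) - ε / 2 * nrm ipV (z ∘ σ - x) : ℝ) : EReal) := by gcongr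
    _ ≤ θ (z ∘ σ) := hball hmem
    _ = specFn θ (conjDiag P z) := by rw [specFn_conjDiag hθ hP]; exact hθ z σ

theorem regSubgrad_of_specFn_conjDiag (hθ : SymmetricFn θ) (hU : U ∈ orthogonalGroup (Fin n) ℝ)
    {x v : Fin n → ℝ} (hv : RegSubgrad ipM (specFn θ) (conjDiag U x) (conjDiag U v)) :
    RegSubgrad ipV θ x v := by
  rw [(isInnerProduct_ipM n).regSubgrad_iff, IsFiniteAt, specFn_conjDiag hθ hU] at hv
  refine (isInnerProduct_ipV n).regSubgrad_iff.2 ⟨hv.1, fun ε hε => ?_⟩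
  have hcont : Continuous (conjDiag U) := (conjDiag U).continuous_of_finiteDimensional
  filter_upwards [(hcont.tendsto x).eventually (hv.2 ε hε)] with y hy
  rwa [← map_sub, ipM_conjDiag_self hU, nrm_conjDiag hU, specFn_conjDiag hθ hU] at hy

end SpectralSubgradients

section Commutators

variable {m R : Type*} [Fintype m] [CommRing R]

theorem trace_mul_lie (A B C : Matrix m m R) :
    (A * ⁅B, C⁆).trace = -(⁅A, C⁆ * B).trace := by
  simp only [Ring.lie_def, Matrix.mul_sub, Matrix.sub_mul, trace_sub, neg_sub]
  rw [← Matrix.mul_assoc, trace_mul_comm, ← Matrix.mul_assoc C, ← Matrix.mul_assoc A C]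

theorem transpose_lie (A B : Matrix m m R) :
    ⁅A, B⁆ᵀ = -⁅Aᵀ, Bᵀ⁆ := by
  simp only [Ring.lie_def, transpose_sub, transpose_mul, neg_sub]

end Commutators

section Rotations

variable {m : Type*} [Fintype m] [DecidableEq m] {S : Matrix m m ℝ}

theorem exp_smul_mem_orthogonalGroup (hS : Sᵀ = -S) (t : ℝ) :
    NormedSpace.exp (t • S) ∈ orthogonalGroup m ℝ := by
  rw [mem_orthogonalGroup_iff, ← exp_transpose, transpose_smul, hS, smul_neg, Matrix.exp_neg]
  exact mul_nonsing_inv _ ((isUnit_iff_isUnit_det _).1 (isUnit_exp _))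

theorem tendsto_inv_smul_exp_smul_sub_one (S : Matrix m m ℝ) :
    Tendsto (fun t : ℝ => t⁻¹ • (NormedSpace.exp (t • S) - 1)) (𝓝[≠] 0) (𝓝 S) := by
  let _ : NormedRing (Matrix m m ℝ) := Matrix.linftyOpNormedRing
  let _ : NormedAlgebra ℝ (Matrix m m ℝ) := Matrix.linftyOpNormedAlgebra
  have := hasDerivAt_iff_tendsto_slope_zero.1 (hasDerivAt_exp_smul_const (𝕂 := ℝ) S (0 : ℝ))
  simp only [zero_add, zero_smul, NormedSpace.exp_zero, one_mul] at this
  exact this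

theorem tendsto_inv_smul_exp_conj_sub (hS : Sᵀ = -S) {ι : Type*} {l : Filter ι} {t : ι → ℝ}
    (ht : Tendsto t l (𝓝[≠] 0)) {M : ι → Matrix m m ℝ} {A W : Matrix m m ℝ}
    (hM : Tendsto (fun k => (t k)⁻¹ • (M k - A)) l (𝓝 W)) :
    Tendsto (fun k => (t k)⁻¹ •
      (NormedSpace.exp (t k • S) * M k * (NormedSpace.exp (t k • S))ᵀ - A))
      l (𝓝 (W + ⁅S, A⁆)) := by
  set R : ι → Matrix m m ℝ := fun k => NormedSpace.exp (t k • S)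
  have hRvel : Tendsto (fun k => (t k)⁻¹ • (R k - 1)) l (𝓝 S) :=
    (tendsto_inv_smul_exp_smul_sub_one S).comp ht
  have hR : Tendsto R l (𝓝 1) := tendsto_of_tendsto_inv_smul_sub ht hRvel
  have hMA : Tendsto M l (𝓝 A) := tendsto_of_tendsto_inv_smul_sub ht hM
  have hRvelT : Tendsto (fun k => ((t k)⁻¹ • (R k - 1))ᵀ) l (𝓝 Sᵀ) :=
    (continuous_id.matrix_transpose.tendsto S).comp hRvel
  have hexpand : ∀ k, (t k)⁻¹ • (R k * M k * (R k)ᵀ - A) =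
      (t k)⁻¹ • (M k - A) + (t k)⁻¹ • (R k - 1) * M k +
        R k * M k * ((t k)⁻¹ • (R k - 1))ᵀ := fun k => by
    rw [transpose_smul, Matrix.smul_mul, Matrix.mul_smul, ← smul_add, ← smul_add, transpose_sub,
      transpose_one]
    congr 1
    noncomm_ring
  have hlim : 1 * A * Sᵀ = -(A * S) := by rw [hS, Matrix.one_mul, Matrix.mul_neg]
  refine Tendsto.congr (fun k => (hexpand k).symm) ?_
  rw [Ring.lie_def, sub_eq_add_neg, ← add_assoc, ← hlim]
  exact (hM.add (hRvel.mul hMA)).add ((hR.mul hMA).mul hRvelT)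

end Rotations

section SimultaneousDiagonalization

variable {n : ℕ} {θ : (Fin n → ℝ) → EReal} {U : Matrix (Fin n) (Fin n) ℝ}

theorem coe_conjDiag_mul (Q U : Matrix (Fin n) (Fin n) ℝ) (x : Fin n → ℝ) :
    (conjDiag (Q * U) x).1 = Q * (conjDiag U x).1 * Qᵀ := by
  simp only [coe_conjDiag, transpose_mul, Matrix.mul_assoc]

/-- `g` is constant along `e^{tS} A e^{-tS}`, whose velocity `⁅S, A⁆` for `S = ⁅B, A⁆` has inner
product `‖S‖²` with `B`. -/
theorem commute_of_regSubgrad_specFn (hθ : SymmetricFn θ) {A B : Sym n}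
    (hB : RegSubgrad ipM (specFn θ) A B) : Commute A.1 B.1 := by
  obtain ⟨P, hP, hA⟩ := exists_eq_conjDiag_eigval A
  set S : Matrix (Fin n) (Fin n) ℝ := ⁅B.1, A.1⁆ with hSdef
  have hAT : A.1ᵀ = A.1 := A.2
  have hBT : B.1ᵀ = B.1 := B.2
  have hS : Sᵀ = -S := by rw [hSdef, transpose_lie, hAT, hBT]
  let D : Sym n := ⟨⁅S, A.1⁆, by
    change ⁅S, A.1⁆ᵀ = _
    rw [transpose_lie, hS, hAT, Ring.lie_def, Ring.lie_def]
    noncomm_ring⟩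
  let γ : ℝ → Sym n := fun t => conjDiag (NormedSpace.exp (t • S) * P) (eigval A.1)
  have hγ : Tendsto (fun t => t⁻¹ • (γ t - A)) (𝓝[>] 0) (𝓝 D) := by
    have hvel := tendsto_inv_smul_exp_conj_sub hS (M := fun _ => A.1) (A := A.1) (W := 0)
      (tendsto_id.mono_right (nhdsGT_le_nhdsNE 0)) (by simp)
    rw [zero_add] at hvel
    refine tendsto_subtype_rng.2 (hvel.congr fun t => ?_)
    rw [Submodule.coe_smul, Submodule.coe_sub, coe_conjDiag_mul, ← hA, id]
  have hlevel : ∀ t, specFn θ (γ t) = specFn θ A := fun t =>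
    specFn_conjDiag hθ (mul_mem (exp_smul_mem_orthogonalGroup hS t) hP) _
  have hle : ipM B D ≤ 0 := (isInnerProduct_ipM n).nonpos_of_regSubgrad_of_curve
    (continuous_ipM n) hB hγ hlevel
  have hipBD : ipM B D = (Sᴴ * S).trace := by
    rw [ipM, trace_mul_lie, conjTranspose_eq_transpose_of_trivial, hS, Matrix.neg_mul, trace_neg]
  have hS0 : S = 0 := trace_conjTranspose_mul_self_eq_zero_iff.1 <|
    (hipBD ▸ hle).antisymm (posSemidef_conjTranspose_mul_self S).trace_nonneg
  exact (sub_eq_zero.1 hS0).symm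

theorem exists_conjDiag_of_regSubgrad_specFn (hθ : SymmetricFn θ) {A B : Sym n}
    (hB : RegSubgrad ipM (specFn θ) A B) :
    ∃ U ∈ orthogonalGroup (Fin n) ℝ, ∃ x v,
      A = conjDiag U x ∧ B = conjDiag U v ∧ RegSubgrad ipV θ x v := by
  obtain ⟨U, hU, x, v, rfl, rfl⟩ :=
    exists_eq_conjDiag_of_commute (commute_of_regSubgrad_specFn hθ hB)
  exact ⟨U, hU, x, v, rfl, rfl, regSubgrad_of_specFn_conjDiag hθ hU hB⟩

theorem diag_transpose_mul_conjDiag_mul (hU : U ∈ orthogonalGroup (Fin n) ℝ) (x : Fin n → ℝ) :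
    diag (Uᵀ * (conjDiag U x).1 * U) = x := by
  rw [mem_orthogonalGroup_iff'] at hU
  have : Uᵀ * (conjDiag U x).1 * U = diagonal x := by
    rw [coe_conjDiag, ← Matrix.mul_assoc, ← Matrix.mul_assoc, hU, Matrix.one_mul,
      Matrix.mul_assoc, hU, Matrix.mul_one]
  rw [this, diag_diagonal]

theorem exists_tendsto_of_tendsto_conjDiag {Us : ℕ → Matrix (Fin n) (Fin n) ℝ}
    {xs : ℕ → Fin n → ℝ} {A : Sym n} (hUs : ∀ k, Us k ∈ orthogonalGroup (Fin n) ℝ)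
    (hU : Tendsto Us atTop (𝓝 U)) (hA : Tendsto (fun k => conjDiag (Us k) (xs k)) atTop (𝓝 A)) :
    ∃ x, Tendsto xs atTop (𝓝 x) ∧ A = conjDiag U x := by
  have hUT : Tendsto (fun k => (Us k)ᵀ) atTop (𝓝 Uᵀ) :=
    (continuous_id.matrix_transpose.tendsto U).comp hU
  have hA' : Tendsto (fun k => (conjDiag (Us k) (xs k)).1) atTop (𝓝 A.1) :=
    (continuous_subtype_val.tendsto A).comp hA
  have hdiag : Tendsto (fun k => diag ((Us k)ᵀ * (conjDiag (Us k) (xs k)).1 * Us k)) atTop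
      (𝓝 (diag (Uᵀ * A.1 * U))) :=
    (continuous_id.matrix_diag.tendsto _).comp ((hUT.mul hA').mul hU)
  have hx : Tendsto xs atTop (𝓝 (diag (Uᵀ * A.1 * U))) := by
    simpa only [diag_transpose_mul_conjDiag_mul (hUs _)] using hdiag
  exact ⟨_, hx, tendsto_nhds_unique hA (tendsto_conjDiag hU hx)⟩

theorem exists_subseq_tendsto_of_orthogonalGroup {Us : ℕ → Matrix (Fin n) (Fin n) ℝ}
    (hUs : ∀ k, Us k ∈ orthogonalGroup (Fin n) ℝ) :
    ∃ U ∈ orthogonalGroup (Fin n) ℝ, ∃ φ : ℕ → ℕ,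
      StrictMono φ ∧ Tendsto (fun k => Us (φ k)) atTop (𝓝 U) := by
  have : FirstCountableTopology (Matrix (Fin n) (Fin n) ℝ) :=
    inferInstanceAs (FirstCountableTopology (Fin n → Fin n → ℝ))
  exact isCompact_orthogonalGroup.tendsto_subseq hUs

theorem exists_conjDiag_of_limSubgrad_specFn (hθ : SymmetricFn θ) {A B : Sym n}
    (hB : LimSubgrad ipM (specFn θ) A B) :
    ∃ U ∈ orthogonalGroup (Fin n) ℝ, ∃ x v,
      A = conjDiag U x ∧ B = conjDiag U v ∧ LimSubgrad ipV θ x v := by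
  obtain ⟨As, Bs, hreg, hAs, hBs, hval⟩ := hB
  choose Us hUs xs vs hAx hBv hv using fun k => exists_conjDiag_of_regSubgrad_specFn hθ (hreg k)
  obtain ⟨U, hU, φ, hφ, hlim⟩ := exists_subseq_tendsto_of_orthogonalGroup hUs
  obtain ⟨x, hx, rfl⟩ := exists_tendsto_of_tendsto_conjDiag (fun k => hUs (φ k)) hlim
    ((hAs.comp hφ.tendsto_atTop).congr fun k => hAx (φ k))
  obtain ⟨v, hv', rfl⟩ := exists_tendsto_of_tendsto_conjDiag (fun k => hUs (φ k)) hlim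
    ((hBs.comp hφ.tendsto_atTop).congr fun k => hBv (φ k))
  refine ⟨U, hU, x, v, rfl, rfl, xs ∘ φ, vs ∘ φ, fun k => hv (φ k), hx, hv', ?_⟩
  rw [specFn_conjDiag hθ hU] at hval
  refine (hval.comp hφ.tendsto_atTop).congr fun k => ?_
  rw [Function.comp_apply, hAx, specFn_conjDiag hθ (hUs _), Function.comp_apply]

theorem limSubgrad_specFn_conjDiag (hθ : SymmetricFn θ) (hU : U ∈ orthogonalGroup (Fin n) ℝ)
    {x v : Fin n → ℝ} (hv : LimSubgrad ipV θ x v) :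
    LimSubgrad ipM (specFn θ) (conjDiag U x) (conjDiag U v) := by
  obtain ⟨xs, vs, hreg, hxs, hvs, hval⟩ := hv
  refine ⟨fun k => conjDiag U (xs k), fun k => conjDiag U (vs k),
    fun k => regSubgrad_specFn_conjDiag hθ hU (hreg k), tendsto_conjDiag tendsto_const_nhds hxs,
    tendsto_conjDiag tendsto_const_nhds hvs, ?_⟩
  simpa only [specFn_conjDiag hθ hU] using hval

theorem regSubgrad_comp_perm (hθ : SymmetricFn θ) (σ : Equiv.Perm (Fin n)) {x v : Fin n → ℝ}
    (hv : RegSubgrad ipV θ x v) : RegSubgrad ipV θ (x ∘ σ) (v ∘ σ) := by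
  have hlift := regSubgrad_specFn_conjDiag hθ (one_mem (orthogonalGroup (Fin n) ℝ)) hv
  rw [← conjDiag_submatrix 1 σ x, ← conjDiag_submatrix 1 σ v] at hlift
  exact regSubgrad_of_specFn_conjDiag hθ (submatrix_mem_orthogonalGroup (one_mem _) σ) hlift

theorem limSubgrad_comp_perm (hθ : SymmetricFn θ) (σ : Equiv.Perm (Fin n)) {x v : Fin n → ℝ}
    (hv : LimSubgrad ipV θ x v) : LimSubgrad ipV θ (x ∘ σ) (v ∘ σ) := by
  obtain ⟨xs, vs, hreg, hxs, hvs, hval⟩ := hv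
  have hcont : Continuous fun y : Fin n → ℝ => y ∘ σ := by fun_prop
  refine ⟨fun k => xs k ∘ σ, fun k => vs k ∘ σ, fun k => regSubgrad_comp_perm hθ σ (hreg k),
    (hcont.tendsto x).comp hxs, (hcont.tendsto v).comp hvs, ?_⟩
  rw [show θ (x ∘ σ) = θ x from hθ x σ]
  exact hval.congr fun k => (hθ (xs k) σ).symm

end SimultaneousDiagonalization

/-! ## Tangents to the graph of the subgradient map -/

section DiagonalCommutators

variable {m : Type*} [Fintype m] [DecidableEq m]

theorem lie_diagonal_apply {R : Type*} [CommRing R] (A : Matrix m m R) (x : m → R) (i j : m) :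
    ⁅A, diagonal x⁆ i j = A i j * (x j - x i) := by
  rw [Ring.lie_def, Matrix.sub_apply, mul_diagonal, diagonal_mul]
  ring

theorem lie_diagonal_eq_zero_of_commute {R : Type*} [CommRing R] [IsDomain R] {x : m → R}
    {A : Matrix m m R} (h : Commute (diagonal x) ⁅A, diagonal x⁆) : ⁅A, diagonal x⁆ = 0 := by
  ext i j
  have hij : ⁅⁅A, diagonal x⁆, diagonal x⁆ i j = 0 := by
    rw [Ring.lie_def, h.eq, sub_self, Matrix.zero_apply]
  rw [lie_diagonal_apply, lie_diagonal_apply, mul_assoc, mul_eq_zero, mul_self_eq_zero,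
    ← mul_eq_zero] at hij
  rw [lie_diagonal_apply, hij, Matrix.zero_apply]

theorem exists_skew_eq_diagonal_add_lie {K : Type*} [Field K] {F G : Matrix m m K} {x y : m → K}
    (hF : F.IsSymm) (hG : G.IsSymm) (hF0 : ∀ i j, i ≠ j → x i = x j → F i j = 0)
    (hG0 : ∀ i j, i ≠ j → y i = y j → G i j = 0)
    (hFG : ∀ i j, F i j * (y j - y i) = G i j * (x j - x i)) :
    ∃ A : Matrix m m K, Aᵀ = -A ∧ F = diagonal F.diag + ⁅A, diagonal x⁆ ∧
      G = diagonal G.diag + ⁅A, diagonal y⁆ := by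
  classical
  let A : Matrix m m K := of fun i j =>
    if x i = x j then G i j / (y j - y i) else F i j / (x j - x i)
  have hA : ∀ i j, A i j = if x i = x j then G i j / (y j - y i) else F i j / (x j - x i) :=
    fun _ _ => rfl
  refine ⟨A, ?_, ?_, ?_⟩ <;> ext i j
  · rw [transpose_apply, Matrix.neg_apply, hA, hA, hF.apply, hG.apply, eq_comm (a := x j)]
    split_ifs <;> rw [← div_neg, neg_sub]
  all_goals
    rw [Matrix.add_apply, lie_diagonal_apply, hA]
    rcases eq_or_ne i j with rfl | hij
    · simp
    rw [diagonal_apply_ne _ hij, zero_add]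
  · split_ifs with hx
    · rw [hx, sub_self, mul_zero, hF0 i j hij hx]
    · rw [div_mul_cancel₀ _ (sub_ne_zero.2 (Ne.symm hx))]
  · rcases eq_or_ne (y i) (y j) with hy | hy
    · rw [hy, sub_self, mul_zero, hG0 i j hij hy]
    split_ifs with hx
    · rw [div_mul_cancel₀ _ (sub_ne_zero.2 hy.symm)]
    · rw [div_mul_eq_mul_div, hFG, mul_div_cancel_right₀ _ (sub_ne_zero.2 (Ne.symm hx))]

theorem mul_sub_eq_of_mul_diagonal_sub {R : Type*} [CommRing R] {V F : Matrix m m R} {z x : m → R}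
    {t : R} (h : V * diagonal z - diagonal x * V = t • F) (i j : m) :
    V i j * (z j - x i) = t * F i j := by
  have hij := congrFun₂ h i j
  rw [Matrix.sub_apply, mul_diagonal, diagonal_mul, Matrix.smul_apply, smul_eq_mul] at hij
  rw [← hij]
  ring

end DiagonalCommutators

section FirstOrderPerturbation

variable {m ι : Type*} [Fintype m] [DecidableEq m] {l : Filter ι} {t : ι → ℝ}
  {V F G : ι → Matrix m m ℝ} {F₀ G₀ : Matrix m m ℝ} {xs ys : ι → m → ℝ} {x y : m → ℝ}

theorem tendsto_inv_smul_sub_diag (ht : ∀ k, t k ≠ 0) (hV : Tendsto V l (𝓝 1))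
    (hF : Tendsto F l (𝓝 F₀))
    (hVF : ∀ k, V k * diagonal (xs k) - diagonal x * V k = t k • F k) :
    Tendsto (fun k => (t k)⁻¹ • (xs k - x)) l (𝓝 F₀.diag) := by
  refine tendsto_pi_nhds.2 fun j => ?_
  have hVj : Tendsto (fun k => V k j j) l (𝓝 1) := by
    simpa only [one_apply_eq] using tendsto_pi_nhds.1 (tendsto_pi_nhds.1 hV j) j
  have hFj : Tendsto (fun k => F k j j) l (𝓝 (F₀ j j)) :=
    tendsto_pi_nhds.1 (tendsto_pi_nhds.1 hF j) j
  have hdiv : Tendsto (fun k => F k j j / V k j j) l (𝓝 (F₀.diag j)) := by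
    simpa only [div_one, Pi.div_def, diag_apply] using hFj.div hVj one_ne_zero
  refine hdiv.congr' ?_
  filter_upwards [hVj.eventually_ne one_ne_zero] with k hk
  rw [div_eq_iff hk, Pi.smul_apply, Pi.sub_apply, smul_eq_mul, mul_assoc, mul_comm _ (V k j j),
    mul_sub_eq_of_mul_diagonal_sub (hVF k), inv_mul_cancel_left₀ (ht k)]

theorem apply_eq_zero_of_mul_diagonal_sub [l.NeBot] (ht : ∀ k, t k ≠ 0) (hV : Tendsto V l (𝓝 1))
    (hF : Tendsto F l (𝓝 F₀))
    (hVF : ∀ k, V k * diagonal (xs k) - diagonal x * V k = t k • F k)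
    {i j : m} (hij : i ≠ j) (hx : x i = x j) : F₀ i j = 0 := by
  have hVij : Tendsto (fun k => V k i j) l (𝓝 0) := by
    simpa only [one_apply_ne hij] using tendsto_pi_nhds.1 (tendsto_pi_nhds.1 hV i) j
  have hprod := hVij.mul (tendsto_pi_nhds.1 (tendsto_inv_smul_sub_diag ht hV hF hVF) j)
  rw [zero_mul] at hprod
  refine tendsto_nhds_unique (tendsto_pi_nhds.1 (tendsto_pi_nhds.1 hF i) j)
    (hprod.congr fun k => ?_)
  rw [Pi.smul_apply, Pi.sub_apply, smul_eq_mul, mul_left_comm, ← hx,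
    mul_sub_eq_of_mul_diagonal_sub (hVF k), inv_mul_cancel_left₀ (ht k)]

theorem mul_sub_eq_mul_sub_of_mul_diagonal_sub [l.NeBot] (ht : ∀ k, t k ≠ 0)
    (hF : Tendsto F l (𝓝 F₀)) (hG : Tendsto G l (𝓝 G₀)) (hx : Tendsto xs l (𝓝 x))
    (hy : Tendsto ys l (𝓝 y))
    (hVF : ∀ k, V k * diagonal (xs k) - diagonal x * V k = t k • F k)
    (hVG : ∀ k, V k * diagonal (ys k) - diagonal y * V k = t k • G k) (i j : m) :
    F₀ i j * (y j - y i) = G₀ i j * (x j - x i) := by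
  have hentry : ∀ {M : ι → Matrix m m ℝ} {M₀ : Matrix m m ℝ} {zs : ι → m → ℝ} {z : m → ℝ},
      Tendsto M l (𝓝 M₀) → Tendsto zs l (𝓝 z) →
      Tendsto (fun k => M k i j * (zs k j - z i)) l (𝓝 (M₀ i j * (z j - z i))) :=
    fun hM hz => (tendsto_pi_nhds.1 (tendsto_pi_nhds.1 hM i) j).mul
      ((tendsto_pi_nhds.1 hz j).sub_const _)
  refine tendsto_nhds_unique (hentry hF hy) ((hentry hG hx).congr fun k => ?_)
  refine mul_left_cancel₀ (ht k) ?_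
  rw [← mul_assoc, ← mul_assoc, ← mul_sub_eq_of_mul_diagonal_sub (hVF k),
    ← mul_sub_eq_of_mul_diagonal_sub (hVG k)]
  ring

end FirstOrderPerturbation

section Velocities

variable {n : ℕ} {Q A : Matrix (Fin n) (Fin n) ℝ} {x w : Fin n → ℝ}

/-- The velocity at `t = 0` of the curve `Q e^{tA} Diag(x + t w) (Q e^{tA})ᵀ` for a
skew-symmetric `A`. -/
def rotVelocity (Q A : Matrix (Fin n) (Fin n) ℝ) (x w : Fin n → ℝ) : Matrix (Fin n) (Fin n) ℝ :=
  Q * (diagonal w + ⁅A, diagonal x⁆) * Qᵀ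

theorem tendsto_inv_smul_conjDiag_sub {ι : Type*} {l : Filter ι} {t : ι → ℝ} (hA : Aᵀ = -A)
    (ht : Tendsto t l (𝓝[≠] 0)) {ws : ι → Fin n → ℝ} (hw : Tendsto ws l (𝓝 w)) {W : Sym n}
    (hW : W.1 = rotVelocity Q A x w) :
    Tendsto (fun k => (t k)⁻¹ •
      (conjDiag (Q * NormedSpace.exp (t k • A)) (x + t k • ws k) - conjDiag Q x)) l (𝓝 W) := by
  have hdiag : Tendsto (fun k => (t k)⁻¹ • (diagonal (x + t k • ws k) - diagonal x)) l
      (𝓝 (diagonal w)) := by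
    refine ((continuous_id.matrix_diagonal.tendsto w).comp hw).congr' ?_
    filter_upwards [ht.eventually eventually_mem_nhdsWithin] with k hk
    have hsub : diagonal (x + t k • ws k) - diagonal x = t k • diagonal (ws k) := by
      rw [← diagonal_smul, sub_eq_iff_eq_add', diagonal_add]
      rfl
    rw [hsub, inv_smul_smul₀ hk, Function.comp_apply, id]
  have hconj := ((tendsto_inv_smul_exp_conj_sub hA ht hdiag).const_mul Q).mul_const Qᵀ
  rw [tendsto_subtype_rng, hW]
  refine hconj.congr fun k => ?_
  rw [Submodule.coe_smul, Submodule.coe_sub, coe_conjDiag_mul, coe_conjDiag, coe_conjDiag,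
    Matrix.mul_smul, Matrix.smul_mul, Matrix.mul_sub, Matrix.sub_mul]

theorem rotVelocity_eq_of_commute (hQ : Q ∈ orthogonalGroup (Fin n) ℝ)
    (h : Commute (conjDiag Q x).1 (rotVelocity Q A x w)) :
    rotVelocity Q A x w = (conjDiag Q w).1 := by
  have hcomm : Commute (diagonal x) (diagonal w + ⁅A, diagonal x⁆) := (commute_conj_iff hQ).1 h
  have hlie : Commute (diagonal x) ⁅A, diagonal x⁆ := by
    simpa only [add_sub_cancel_left] using hcomm.sub_right (commute_diagonal x w)
  rw [rotVelocity, lie_diagonal_eq_zero_of_commute hlie, add_zero, coe_conjDiag]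

end Velocities

section GraphTangents

variable {n : ℕ} {θ : (Fin n → ℝ) → EReal} {U Q : Matrix (Fin n) (Fin n) ℝ} {x y w η : Fin n → ℝ}
  {t : ℕ → ℝ} {Ws Hs : ℕ → Sym n} {W H : Sym n}

theorem exists_subseq_conjDiag_of_limSubgrad_specFn (hθ : SymmetricFn θ)
    (hU : U ∈ orthogonalGroup (Fin n) ℝ) {As Bs : ℕ → Sym n}
    (hA : Tendsto As atTop (𝓝 (conjDiag U x))) (hB : Tendsto Bs atTop (𝓝 (conjDiag U y)))
    (hmem : ∀ k, LimSubgrad ipM (specFn θ) (As k) (Bs k)) :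
    ∃ φ : ℕ → ℕ, StrictMono φ ∧ ∃ Q ∈ orthogonalGroup (Fin n) ℝ,
      conjDiag Q x = conjDiag U x ∧ conjDiag Q y = conjDiag U y ∧
      ∃ Vs xs ys, (∀ k, Vs k ∈ orthogonalGroup (Fin n) ℝ) ∧ Tendsto Vs atTop (𝓝 Q) ∧
        Tendsto xs atTop (𝓝 x) ∧ Tendsto ys atTop (𝓝 y) ∧
        ∀ k, As (φ k) = conjDiag (Vs k) (xs k) ∧ Bs (φ k) = conjDiag (Vs k) (ys k) ∧
          LimSubgrad ipV θ (xs k) (ys k) := by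
  choose Vs hVs xs ys hAx hBy hxy using fun k => exists_conjDiag_of_limSubgrad_specFn hθ (hmem k)
  obtain ⟨Q, hQ, φ, hφ, hlim⟩ := exists_subseq_tendsto_of_orthogonalGroup hVs
  obtain ⟨x', hx', hxx'⟩ := exists_tendsto_of_tendsto_conjDiag (fun k => hVs (φ k)) hlim
    ((hA.comp hφ.tendsto_atTop).congr fun k => hAx (φ k))
  obtain ⟨y', hy', hyy'⟩ := exists_tendsto_of_tendsto_conjDiag (fun k => hVs (φ k)) hlim
    ((hB.comp hφ.tendsto_atTop).congr fun k => hBy (φ k))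
  obtain ⟨σ, hσ⟩ := exists_perm_forall_comp_eq_of_conjDiag_eq hQ hU
  obtain rfl := hσ x' x hxx'.symm
  obtain rfl := hσ y' y hyy'.symm
  have hcols : Continuous fun M : Matrix (Fin n) (Fin n) ℝ => M.submatrix id σ := by fun_prop
  have hperm : Continuous fun z : Fin n → ℝ => z ∘ σ := by fun_prop
  refine ⟨φ, hφ, Q.submatrix id σ, submatrix_mem_orthogonalGroup hQ σ,
    (conjDiag_submatrix Q σ x').trans hxx'.symm, (conjDiag_submatrix Q σ y').trans hyy'.symm,
    fun k => (Vs (φ k)).submatrix id σ, fun k => xs (φ k) ∘ σ, fun k => ys (φ k) ∘ σ,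
    fun k => submatrix_mem_orthogonalGroup (hVs _) σ, (hcols.tendsto Q).comp hlim,
    (hperm.tendsto x').comp hx', (hperm.tendsto y').comp hy', fun k => ?_⟩
  rw [conjDiag_submatrix, conjDiag_submatrix]
  exact ⟨hAx _, hBy _, limSubgrad_comp_perm hθ σ (hxy _)⟩

theorem mul_diagonal_sub_of_conjDiag_add_smul {V : Matrix (Fin n) (Fin n) ℝ} {z : Fin n → ℝ}
    {s : ℝ} (hQ : Q ∈ orthogonalGroup (Fin n) ℝ) (hV : V ∈ orthogonalGroup (Fin n) ℝ)
    (h : conjDiag Q x + s • W = conjDiag V z) :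
    Qᵀ * V * diagonal z - diagonal x * (Qᵀ * V) = s • (Qᵀ * W.1 * V) := by
  rw [mem_orthogonalGroup_iff'] at hQ hV
  have hW : s • W.1 = V * diagonal z * Vᵀ - Q * diagonal x * Qᵀ :=
    eq_sub_of_add_eq' (congrArg Subtype.val h)
  calc Qᵀ * V * diagonal z - diagonal x * (Qᵀ * V)
      = Qᵀ * V * diagonal z * (Vᵀ * V) - Qᵀ * Q * diagonal x * (Qᵀ * V) := by
        rw [hQ, hV, Matrix.mul_one, Matrix.one_mul]
    _ = Qᵀ * (s • W.1) * V := by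
        rw [hW]
        noncomm_ring
    _ = s • (Qᵀ * W.1 * V) := by rw [Matrix.mul_smul, Matrix.smul_mul]

theorem eq_rotVelocity_of_transpose_mul_mul_eq {A : Matrix (Fin n) (Fin n) ℝ}
    (hQ : Q ∈ orthogonalGroup (Fin n) ℝ) {M : Matrix (Fin n) (Fin n) ℝ}
    (h : Qᵀ * M * Q = diagonal w + ⁅A, diagonal x⁆) : M = rotVelocity Q A x w := by
  rw [mem_orthogonalGroup_iff] at hQ
  calc M = Q * Qᵀ * M * (Q * Qᵀ) := by rw [hQ, Matrix.one_mul, Matrix.mul_one]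
    _ = rotVelocity Q A x w := by
      rw [rotVelocity, ← h]
      simp only [Matrix.mul_assoc]

/-- To first order, a joint eigenbasis of the pair `(X + t W, Y + t H)` moves by a single rotation
`Q e^{tA}`, which therefore accounts for the off-diagonal parts of both `W` and `H`. -/
theorem exists_rotVelocity_of_tendsto (hQ : Q ∈ orthogonalGroup (Fin n) ℝ) (ht : ∀ k, t k ≠ 0)
    {Vs : ℕ → Matrix (Fin n) (Fin n) ℝ} {xs ys : ℕ → Fin n → ℝ}
    (hVs : ∀ k, Vs k ∈ orthogonalGroup (Fin n) ℝ) (hV : Tendsto Vs atTop (𝓝 Q))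
    (hx : Tendsto xs atTop (𝓝 x)) (hy : Tendsto ys atTop (𝓝 y))
    (hW : Tendsto Ws atTop (𝓝 W)) (hH : Tendsto Hs atTop (𝓝 H))
    (hxs : ∀ k, conjDiag Q x + t k • Ws k = conjDiag (Vs k) (xs k))
    (hys : ∀ k, conjDiag Q y + t k • Hs k = conjDiag (Vs k) (ys k)) :
    ∃ A w η, Aᵀ = -A ∧ W.1 = rotVelocity Q A x w ∧ H.1 = rotVelocity Q A y η ∧
      Tendsto (fun k => (t k)⁻¹ • (xs k - x)) atTop (𝓝 w) ∧
      Tendsto (fun k => (t k)⁻¹ • (ys k - y)) atTop (𝓝 η) := by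
  have hV1 : Tendsto (fun k => Qᵀ * Vs k) atTop (𝓝 1) := by
    simpa only [(mem_orthogonalGroup_iff' _ _).1 hQ] using hV.const_mul Qᵀ
  have hconj : ∀ {Zs : ℕ → Sym n} {Z : Sym n}, Tendsto Zs atTop (𝓝 Z) →
      Tendsto (fun k => Qᵀ * (Zs k).1 * Vs k) atTop (𝓝 (Qᵀ * Z.1 * Q)) := fun hZ =>
    (((continuous_subtype_val.tendsto _).comp hZ).const_mul Qᵀ).mul hV
  have hsymm : ∀ Z : Sym n, (Qᵀ * Z.1 * Q).IsSymm := fun Z => by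
    have hZ : Z.1ᵀ = Z.1 := Z.2
    rw [IsSymm, transpose_mul, transpose_mul, transpose_transpose, hZ, Matrix.mul_assoc]
  have hF k := mul_diagonal_sub_of_conjDiag_add_smul hQ (hVs k) (hxs k)
  have hG k := mul_diagonal_sub_of_conjDiag_add_smul hQ (hVs k) (hys k)
  obtain ⟨A, hA, hWA, hHA⟩ := exists_skew_eq_diagonal_add_lie (hsymm W) (hsymm H)
    (fun _ _ => apply_eq_zero_of_mul_diagonal_sub ht hV1 (hconj hW) hF)
    (fun _ _ => apply_eq_zero_of_mul_diagonal_sub ht hV1 (hconj hH) hG)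
    (mul_sub_eq_mul_sub_of_mul_diagonal_sub ht (hconj hW) (hconj hH) hx hy hF hG)
  exact ⟨A, _, _, hA, eq_rotVelocity_of_transpose_mul_mul_eq hQ hWA,
    eq_rotVelocity_of_transpose_mul_mul_eq hQ hHA, tendsto_inv_smul_sub_diag ht hV1 (hconj hW) hF,
    tendsto_inv_smul_sub_diag ht hV1 (hconj hH) hG⟩

theorem exists_rotVelocity_of_limSubgrad_specFn (hθ : SymmetricFn θ)
    (hU : U ∈ orthogonalGroup (Fin n) ℝ) (ht : ∀ k, t k ≠ 0) (ht0 : Tendsto t atTop (𝓝 0))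
    (hW : Tendsto Ws atTop (𝓝 W)) (hH : Tendsto Hs atTop (𝓝 H))
    (hmem : ∀ k, LimSubgrad ipM (specFn θ) (conjDiag U x + t k • Ws k)
      (conjDiag U y + t k • Hs k)) :
    ∃ Q ∈ orthogonalGroup (Fin n) ℝ, conjDiag Q x = conjDiag U x ∧ conjDiag Q y = conjDiag U y ∧
      ∃ A w η, Aᵀ = -A ∧ W.1 = rotVelocity Q A x w ∧ H.1 = rotVelocity Q A y η ∧
      ∃ φ : ℕ → ℕ, StrictMono φ ∧ ∃ ws ηs, Tendsto ws atTop (𝓝 w) ∧ Tendsto ηs atTop (𝓝 η) ∧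
        ∀ k, LimSubgrad ipV θ (x + t (φ k) • ws k) (y + t (φ k) • ηs k) := by
  obtain ⟨φ, hφ, Q, hQ, hQx, hQy, Vs, xs, ys, hVs, hV, hx, hy, hdecomp⟩ :=
    exists_subseq_conjDiag_of_limSubgrad_specFn hθ hU (tendsto_add_smul_of_tendsto_zero ht0 hW)
      (tendsto_add_smul_of_tendsto_zero ht0 hH) hmem
  obtain ⟨A, w, η, hA, hWA, hHA, hw, hη⟩ := exists_rotVelocity_of_tendsto hQ (fun k => ht (φ k))
    hVs hV hx hy (hW.comp hφ.tendsto_atTop) (hH.comp hφ.tendsto_atTop)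
    (fun k => hQx ▸ (hdecomp k).1) (fun k => hQy ▸ (hdecomp k).2.1)
  refine ⟨Q, hQ, hQx, hQy, A, w, η, hA, hWA, hHA, φ, hφ, _, _, hw, hη, fun k => ?_⟩
  rw [smul_inv_smul₀ (ht _), smul_inv_smul₀ (ht _), add_sub_cancel, add_sub_cancel]
  exact (hdecomp k).2.2

end GraphTangents

/-! ## Proto-differentiability -/

theorem exists_seq_mem_tendsto_of_subseq {α : Type*} [PseudoMetricSpace α] {S : ℕ → Set α}
    (hS : ∀ k, (S k).Nonempty) {p : α}
    (h : ∀ ns : ℕ → ℕ, Tendsto ns atTop atTop → ∃ (ms : ℕ → ℕ) (q : ℕ → α),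
      (∀ k, q k ∈ S (ns (ms k))) ∧ Tendsto q atTop (𝓝 p)) :
    ∃ q : ℕ → α, (∀ k, q k ∈ S k) ∧ Tendsto q atTop (𝓝 p) := by
  have hinf : Tendsto (fun k => Metric.infDist p (S k)) atTop (𝓝 0) := by
    refine tendsto_of_subseq_tendsto fun ns hns => ?_
    obtain ⟨ms, q, hq, hlim⟩ := h ns hns
    exact ⟨ms, squeeze_zero (fun _ => Metric.infDist_nonneg)
      (fun k => Metric.infDist_le_dist_of_mem (hq k)) <| by
        simpa only [dist_comm] using tendsto_iff_dist_tendsto_zero.1 hlim⟩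
  have hnear : ∀ k : ℕ, ∃ q ∈ S k, dist p q < Metric.infDist p (S k) + 1 / ((k : ℝ) + 1) :=
    fun k => (Metric.infDist_lt_iff (hS k)).1 (lt_add_of_pos_right _ (by positivity))
  choose q hq hd using hnear
  refine ⟨q, hq, tendsto_iff_dist_tendsto_zero.2 <|
    squeeze_zero (fun _ => dist_nonneg) (fun k => dist_comm (q k) p ▸ (hd k).le) ?_⟩
  simpa only [add_zero] using hinf.add (tendsto_one_div_add_atTop_nhds_zero_nat (𝕜 := ℝ))

section ProtoDifferentiability

variable {n : ℕ} {θ : (Fin n → ℝ) → EReal} {U : Matrix (Fin n) (Fin n) ℝ} {x y w η : Fin n → ℝ}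

theorem protoDiff_limSubgrad_specFn_conjDiag (hθ : SymmetricFn θ)
    (hU : U ∈ orthogonalGroup (Fin n) ℝ)
    (h : ProtoDiff (fun z => {v | LimSubgrad ipV θ z v}) x y) :
    ProtoDiff (fun A => {B | LimSubgrad ipM (specFn θ) A B}) (conjDiag U x) (conjDiag U y) := by
  rintro W H ⟨t, ps, ht, ht0, hps, hmem⟩ s hs hs0
  obtain ⟨Q, hQ, hQx, hQy, A, w, η, hA, hW, hH, φ, hφ, ws, ηs, hw, hη, hgph⟩ :=
    exists_rotVelocity_of_limSubgrad_specFn hθ hU (fun k => (ht k).ne') ht0 hps.fst_nhds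
      hps.snd_nhds hmem
  obtain ⟨ws', ηs', hw', hη', hgph'⟩ := h w η ⟨t ∘ φ, fun k => (ws k, ηs k), fun k => ht (φ k),
    ht0.comp hφ.tendsto_atTop, hw.prodMk_nhds hη, hgph⟩ s hs hs0
  have hs_ne : Tendsto s atTop (𝓝[≠] 0) :=
    tendsto_nhdsWithin_iff.2 ⟨hs0, .of_forall fun k => (hs k).ne'⟩
  refine ⟨_, _, tendsto_inv_smul_conjDiag_sub hA hs_ne hw' hW,
    tendsto_inv_smul_conjDiag_sub hA hs_ne hη' hH, fun k => ?_⟩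
  rw [smul_inv_smul₀ (hs k).ne', smul_inv_smul₀ (hs k).ne', hQx, hQy, add_sub_cancel,
    add_sub_cancel]
  exact limSubgrad_specFn_conjDiag hθ (mul_mem hQ (exp_smul_mem_orthogonalGroup hA _)) (hgph' k)

theorem conjDiag_mem_tangentCone (hθ : SymmetricFn θ) (hU : U ∈ orthogonalGroup (Fin n) ℝ)
    (h : (w, η) ∈ tangentCone {p | LimSubgrad ipV θ p.1 p.2} (x, y)) :
    (conjDiag U w, conjDiag U η) ∈
      tangentCone {p | LimSubgrad ipM (specFn θ) p.1 p.2} (conjDiag U x, conjDiag U y) := by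
  obtain ⟨t, ps, ht, ht0, hps, hmem⟩ := h
  refine ⟨t, fun k => (conjDiag U (ps k).1, conjDiag U (ps k).2), ht, ht0,
    (tendsto_conjDiag tendsto_const_nhds hps.fst_nhds).prodMk_nhds
      (tendsto_conjDiag tendsto_const_nhds hps.snd_nhds), fun k => ?_⟩
  have hlift : LimSubgrad ipM (specFn θ) (conjDiag U (x + t k • (ps k).1))
      (conjDiag U (y + t k • (ps k).2)) := limSubgrad_specFn_conjDiag hθ hU (hmem k)
  rwa [map_add, map_add, map_smul, map_smul] at hlift

theorem conjDiag_eq_of_eq_rotVelocity {Q A : Matrix (Fin n) (Fin n) ℝ} {w' : Fin n → ℝ}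
    (hU : U ∈ orthogonalGroup (Fin n) ℝ) (hQ : Q ∈ orthogonalGroup (Fin n) ℝ)
    (hx : conjDiag Q x = conjDiag U x) (h : (conjDiag U w).1 = rotVelocity Q A x w') :
    conjDiag U w = conjDiag Q w' := by
  refine Subtype.ext (h.trans (rotVelocity_eq_of_commute hQ ?_))
  rw [← h, hx]
  exact (commute_conj_iff hU).2 (commute_diagonal x w)

theorem exists_limSubgrad_of_tendsto_conjDiag (hθ : SymmetricFn θ)
    (hU : U ∈ orthogonalGroup (Fin n) ℝ) {t : ℕ → ℝ} {Ws Hs : ℕ → Sym n} (ht : ∀ k, t k ≠ 0)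
    (ht0 : Tendsto t atTop (𝓝 0)) (hW : Tendsto Ws atTop (𝓝 (conjDiag U w)))
    (hH : Tendsto Hs atTop (𝓝 (conjDiag U η)))
    (hmem : ∀ k, LimSubgrad ipM (specFn θ) (conjDiag U x + t k • Ws k)
      (conjDiag U y + t k • Hs k)) :
    ∃ (φ : ℕ → ℕ) (ws ηs : ℕ → Fin n → ℝ), Tendsto ws atTop (𝓝 w) ∧ Tendsto ηs atTop (𝓝 η) ∧
      ∀ k, LimSubgrad ipV θ (x + t (φ k) • ws k) (y + t (φ k) • ηs k) := by
  obtain ⟨Q, hQ, hQx, hQy, A, w', η', -, hW', hH', φ, -, ws, ηs, hw, hη, hgph⟩ :=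
    exists_rotVelocity_of_limSubgrad_specFn hθ hU ht ht0 hW hH hmem
  obtain ⟨σ, hσ⟩ := exists_perm_forall_comp_eq_of_conjDiag_eq hQ hU
  have hxσ : x ∘ σ = x := hσ x x hQx
  have hyσ : y ∘ σ = y := hσ y y hQy
  obtain rfl := hσ w' w (conjDiag_eq_of_eq_rotVelocity hU hQ hQx hW').symm
  obtain rfl := hσ η' η (conjDiag_eq_of_eq_rotVelocity hU hQ hQy hH').symm
  have hperm : Continuous fun z : Fin n → ℝ => z ∘ σ := by fun_prop
  refine ⟨φ, fun k => ws k ∘ σ, fun k => ηs k ∘ σ, (hperm.tendsto w').comp hw,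
    (hperm.tendsto η').comp hη, fun k => ?_⟩
  have hperm_gph : LimSubgrad ipV θ (x ∘ σ + t (φ k) • ws k ∘ σ) (y ∘ σ + t (φ k) • ηs k ∘ σ) :=
    limSubgrad_comp_perm hθ σ (hgph k)
  rwa [hxσ, hyσ] at hperm_gph

theorem protoDiff_limSubgrad_of_specFn_conjDiag (hθ : SymmetricFn θ)
    (hU : U ∈ orthogonalGroup (Fin n) ℝ) (hy : LimSubgrad ipV θ x y)
    (h : ProtoDiff (fun A => {B | LimSubgrad ipM (specFn θ) A B}) (conjDiag U x) (conjDiag U y)) :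
    ProtoDiff (fun z => {v | LimSubgrad ipV θ z v}) x y := by
  intro w η hwη s hs hs0
  obtain ⟨Ws, Hs, hW, hH, hmem⟩ := h _ _ (conjDiag_mem_tangentCone hθ hU hwη) s hs hs0
  let S : ℕ → Set ((Fin n → ℝ) × (Fin n → ℝ)) := fun k =>
    {p | LimSubgrad ipV θ (x + s k • p.1) (y + s k • p.2)}
  have hS : ∀ k, (S k).Nonempty := fun k =>
    ⟨(0, 0), by
      change LimSubgrad ipV θ (x + s k • 0) (y + s k • 0)
      rwa [smul_zero, add_zero, add_zero]⟩
  obtain ⟨q, hq, hqlim⟩ := exists_seq_mem_tendsto_of_subseq hS (p := (w, η)) fun ns hns => by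
    obtain ⟨φ, ws, ηs, hw, hη, hgph⟩ := exists_limSubgrad_of_tendsto_conjDiag hθ hU
      (fun k => (hs (ns k)).ne') (hs0.comp hns) (hW.comp hns) (hH.comp hns) fun k => hmem (ns k)
    exact ⟨φ, fun k => (ws k, ηs k), hgph, hw.prodMk_nhds hη⟩
  exact ⟨fun k => (q k).1, fun k => (q k).2, hqlim.fst_nhds, hqlim.snd_nhds, hq⟩

end ProtoDifferentiability

theorem proto_diff_spectral_general {n : ℕ} {θ : (Fin n → ℝ) → EReal} {X Y : Sym n}
    {U : Matrix (Fin n) (Fin n) ℝ} {x y : Fin n → ℝ} (hθ : SymmetricFn θ)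
    (hU : U ∈ orthogonalGroup (Fin n) ℝ) (hX : X.val = U * diagonal x * Uᵀ)
    (hY : Y.val = U * diagonal y * Uᵀ) (hy : LimSubgrad ipV θ x y) :
    ProtoDiff (fun A => {B | LimSubgrad ipM (specFn θ) A B}) X Y ↔
      ProtoDiff (fun z => {v | LimSubgrad ipV θ z v}) x y := by
  obtain rfl : X = conjDiag U x := Subtype.ext hX
  obtain rfl : Y = conjDiag U y := Subtype.ext hY
  exact ⟨protoDiff_limSubgrad_of_specFn_conjDiag hθ hU hy,
    protoDiff_limSubgrad_specFn_conjDiag hθ hU⟩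

/-- Theorem 4.6: proto-differentiability of the subgradient mapping of a
spectral function. -/
theorem proto_diff_spectral {n : ℕ} (θ : (Fin n → ℝ) → EReal)
    (X Y : Sym n) (U : Matrix (Fin n) (Fin n) ℝ) (y : Fin n → ℝ)
    (hsym : SymmetricFn θ) (hLip : LocLipRelDom ipV θ)
    (hlsc : LowerSemicontinuous (specFn θ))
    (hY : LimSubgrad ipM (specFn θ) X Y)
    (hpr : ProxRegularAt ipM (specFn θ) X)
    (hsc : SubdiffContAt ipM (specFn θ) X)
    (hy : LimSubgrad ipV θ (eigval X.val) y)
    (hU : U ∈ eigOrth X.val)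
    (hYdec : Y.val = U * Matrix.diagonal y * Uᵀ) :
    ProtoDiff (fun A : Sym n => {B : Sym n | LimSubgrad ipM (specFn θ) A B}) X Y ↔
      ProtoDiff (fun x : Fin n → ℝ => {v : Fin n → ℝ | LimSubgrad ipV θ x v})
        (eigval X.val) y :=
  proto_diff_spectral_general hsym ((mem_orthogonalGroup_iff _ _).2 hU.1) hU.2 hYdec hy

end SpecPaper
end
end

section
/- Let θ : ℝⁿ → [−∞,+∞] be symmetric and locally Lipschitz continuous relative to its domain, let g = θ∘λ be lower semicontinuous and prox-bounded, let (X,Y) ∈ gph ∂g, and assume g is prox-regular and subdifferentially continuous at X. Let y ∈ ∂θ(λ(X)) and U ∈ Oⁿ(X) be such that Y = U·Diag(y)·Uᵀ. Then the following are equivalent: (a) for every sufficiently small γ > 0, the proximal mapping prox_{γg} is single-valued on a neighborhood of X + γY and directionally differentiable at X + γY; (b) for every sufficiently small γ > 0, the proximal mapping prox_{γθ} is single-valued on a neighborhood of λ(X) + γy and directionally differentiable at λ(X) + γy. -/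
open Filter Topology Matrix

noncomputable section

namespace SpecPaper

/-! ## Generic variational analysis definitions over a topological real vector space -/

variable {E : Type*}

/-!
If `g` is prox-bounded and prox-regular at `X` for `Y`, then for small `γ` the map `prox_{γg}` is
single-valued and Lipschitz near `X + γY`. Conjugation by sign matrices fixes `Diag(u)` and leaves
`g` invariant, so a unique proximal point of `U Diag(u) Uᵀ` is of the form `U Diag(w) Uᵀ`, and then
`w` is the unique proximal point of `u` for `θ`. Restricting `prox_{γg}` to the matrices
`U Diag(u) Uᵀ` transfers directional derivatives from `g` to `θ`. Conversely, every direction `H` at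
`U Diag(z) Uᵀ` is tangent to a curve `B(t) Diag(z + t d) B(t)ᵀ` with `B(t)` orthogonal and smooth.
Along this curve `prox_{γg}` equals `B(t) Diag(prox_{γθ}(z + t d)) B(t)ᵀ`, which is differentiable
from the right, and by the Lipschitz property its derivative is the one in direction `H`.
-/

/-! ### Proximal mappings in inner product spaces -/

lemma ereal_add_coe_le_add_coe_iff {a b : EReal} {s t : ℝ} :
    a + s ≤ b + t ↔ a + ((s - t : ℝ) : EReal) ≤ b := by
  induction a using EReal.rec <;> induction b using EReal.rec <;>
    simp only [EReal.bot_add, EReal.top_add_coe, bot_le, le_top, ← EReal.coe_add, top_le_iff,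
      le_bot_iff, EReal.coe_ne_bot, EReal.coe_ne_top, top_ne_bot, EReal.coe_le_coe_iff]
  exact ⟨fun h => by linarith, fun h => by linarith⟩

lemma RegSubgrad.limSubgrad [AddCommGroup E] [TopologicalSpace E] {ip : E → E → ℝ}
    {f : E → EReal} {x v : E} (h : RegSubgrad ip f x v) : LimSubgrad ip f x v :=
  ⟨fun _ => x, fun _ => v, fun _ => h, tendsto_const_nhds, tendsto_const_nhds, tendsto_const_nhds⟩

section InnerProductSpace

variable [NormedAddCommGroup E] [InnerProductSpace ℝ E] {f : E → EReal} {x v w z : E} {r R γ : ℝ}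
  {S : Set E}

local notation "⟪" a ", " b "⟫" => inner ℝ a b

/-- `v` is a proximal subgradient of `f` at `x` with modulus `r`, its quadratic minorant being
valid on the set `S`. -/
def ProxSubgradOn (f : E → EReal) (r : ℝ) (x v : E) (S : Set E) : Prop :=
  ∀ w ∈ S, f x + ((⟪v, w - x⟫ - r / 2 * ‖w - x‖ ^ 2 : ℝ) : EReal) ≤ f w

lemma ProxSubgradOn.mono {S' : Set E} (h : ProxSubgradOn f r x v S) (hS : S' ⊆ S) :
    ProxSubgradOn f r x v S' :=
  fun w hw => h w (hS hw)

lemma nrm_inner (x : E) : nrm (inner ℝ) x = ‖x‖ := by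
  rw [nrm, real_inner_self_eq_norm_sq, Real.sqrt_sq (norm_nonneg x)]

lemma prox_objective_le_iff (hγ : γ ≠ 0) :
    f w + ((1 / (2 * γ) * ⟪w - z, w - z⟫ : ℝ) : EReal) ≤
        f x + ((1 / (2 * γ) * ⟪x - z, x - z⟫ : ℝ) : EReal) ↔
      ProxSubgradOn f γ⁻¹ w (γ⁻¹ • (z - w)) {x} := by
  have expand : 1 / (2 * γ) * ⟪w - z, w - z⟫ - 1 / (2 * γ) * ⟪x - z, x - z⟫ =
      ⟪γ⁻¹ • (z - w), x - w⟫ - γ⁻¹ / 2 * ‖x - w‖ ^ 2 := by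
    rw [← real_inner_self_eq_norm_sq (x - w)]
    simp only [inner_sub_left, inner_sub_right, real_inner_smul_left, real_inner_comm z,
      real_inner_comm x w]
    field_simp
    ring
  rw [ereal_add_coe_le_add_coe_iff, expand]
  simp [ProxSubgradOn]

lemma mem_proxSet_iff_proxSubgradOn (hγ : γ ≠ 0) :
    w ∈ proxSet (inner ℝ) f γ z ↔
      ProxSubgradOn f γ⁻¹ w (γ⁻¹ • (z - w)) Set.univ := by
  have h : w ∈ proxSet (inner ℝ) f γ z ↔
      ∀ x, ProxSubgradOn f γ⁻¹ w (γ⁻¹ • (z - w)) {x} :=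
    forall_congr' fun x => prox_objective_le_iff hγ
  simp [h, ProxSubgradOn]

lemma ProxSubgradOn.ne_bot (hx : ProxSubgradOn f r x v {w}) (hfx : f x ≠ ⊥) : f w ≠ ⊥ := by
  intro hbot
  have h := hx w rfl
  rw [hbot, le_bot_iff, EReal.add_eq_bot_iff] at h
  exact h.elim hfx (EReal.coe_ne_bot _)

lemma ProxSubgradOn.ne_top (hx : ProxSubgradOn f r x v {w}) (hfw : f w ≠ ⊤) : f x ≠ ⊤ := by
  intro htop
  have h := hx w rfl
  rw [htop, EReal.top_add_coe, top_le_iff] at h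
  exact hfw h

lemma ProxSubgradOn.regSubgrad (h : ProxSubgradOn f r x v Set.univ) (hx : IsFiniteAt f x) :
    RegSubgrad (inner ℝ) f x v := by
  refine ⟨hx, ?_⟩
  rcases eq_or_neBot (𝓝[≠] x) with hbot | hne
  · simp [hbot]
  have vanishing : Tendsto (fun w : E => ((-(r / 2) * ‖w - x‖ : ℝ) : EReal)) (𝓝[≠] x) (𝓝 0) := by
    have : Continuous fun w : E => ((-(r / 2) * ‖w - x‖ : ℝ) : EReal) :=
      continuous_coe_real_ereal.comp (by fun_prop)
    simpa using (this.tendsto x).mono_left nhdsWithin_le_nhds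
  rw [← vanishing.liminf_eq]
  refine liminf_le_liminf ?_
  filter_upwards [self_mem_nhdsWithin] with w hw
  have hpos : 0 < ‖w - x‖ := norm_pos_iff.2 (sub_ne_zero.2 hw)
  have hle := h w trivial
  have hfw : f w ≠ ⊥ := (h.mono (Set.subset_univ {w})).ne_bot hx.2
  rw [nrm_inner]
  lift f x to ℝ using hx with a
  generalize f w = b at hle hfw
  induction b using EReal.rec with
  | bot => exact absurd rfl hfw
  | top => simp [EReal.coe_mul_top_of_pos, hpos]
  | coe b =>
    norm_cast at hle ⊢
    rw [inv_mul_eq_div, le_div_iff₀ hpos]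
    linarith

lemma exists_quadratic_le_quadratic (a c α : ℝ) (x v : E) {ε : ℝ} (hε : 0 < ε) :
    ∃ R : ℝ, ∀ w, ε ≤ ‖w - x‖ → a + ⟪v, w - x⟫ - R / 2 * ‖w - x‖ ^ 2 ≤ c - α * ‖w‖ ^ 2 := by
  set A : ℝ := |a| + |c| + 2 * |α| * ‖x‖ ^ 2
  refine ⟨2 * (A / ε ^ 2 + ‖v‖ / ε + 2 * |α|), fun w hw => ?_⟩
  set s := ‖w - x‖
  have inner_le : ⟪v, w - x⟫ ≤ ‖v‖ * s := real_inner_le_norm _ _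
  have norm_sq_le : ‖w‖ ^ 2 ≤ 2 * ‖x‖ ^ 2 + 2 * s ^ 2 := by
    have : ‖w‖ ^ 2 ≤ (‖x‖ + s) ^ 2 := by gcongr; exact norm_le_norm_add_norm_sub' w x
    nlinarith [sq_nonneg (‖x‖ - s)]
  have α_le : α * ‖w‖ ^ 2 ≤ |α| * (2 * ‖x‖ ^ 2 + 2 * s ^ 2) := by
    gcongr
    exact le_abs_self α
  have one_le : 1 ≤ s / ε := (one_le_div hε).2 hw
  have A_le : A ≤ A * (s / ε) ^ 2 := le_mul_of_one_le_right (by positivity) (one_le_pow₀ one_le)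
  have v_le : ‖v‖ * s ≤ ‖v‖ * s * (s / ε) := le_mul_of_one_le_right (by positivity) one_le
  have regroup : 2 * (A / ε ^ 2 + ‖v‖ / ε + 2 * |α|) / 2 * s ^ 2 =
      A * (s / ε) ^ 2 + ‖v‖ * s * (s / ε) + 2 * |α| * s ^ 2 := by ring
  linarith [le_abs_self a, neg_abs_le c]

lemma ProxBounded.exists_proxSubgradOn_univ {ε : ℝ}
    (hpb : ProxBounded (inner ℝ) f) (hx : IsFiniteAt f x) (hε : 0 < ε)
    (h : ProxSubgradOn f r x v (Metric.ball x ε)) :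
    ∃ R ≥ r, ProxSubgradOn f R x v Set.univ := by
  obtain ⟨α, c, hpb⟩ := hpb
  obtain ⟨R, hR⟩ := exists_quadratic_le_quadratic (f x).toReal c α x v hε
  refine ⟨max r R, le_max_left r R, fun w _ => ?_⟩
  rcases lt_or_ge ‖w - x‖ ε with hw | hw
  · refine le_trans ?_ (h w (by rwa [mem_ball_iff_norm]))
    gcongr
    exact le_max_left r R
  · have far : (f x).toReal + (⟪v, w - x⟫ - max r R / 2 * ‖w - x‖ ^ 2) ≤ c - α * ‖w‖ ^ 2 :=
      calc (f x).toReal + (⟪v, w - x⟫ - max r R / 2 * ‖w - x‖ ^ 2)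
        _ ≤ (f x).toReal + (⟪v, w - x⟫ - R / 2 * ‖w - x‖ ^ 2) := by gcongr; exact le_max_right r R
        _ ≤ c - α * ‖w‖ ^ 2 := by linarith [hR w hw]
    calc f x + ((⟪v, w - x⟫ - max r R / 2 * ‖w - x‖ ^ 2 : ℝ) : EReal)
      _ = (((f x).toReal + (⟪v, w - x⟫ - max r R / 2 * ‖w - x‖ ^ 2) : ℝ) : EReal) := by
        rw [EReal.coe_add, EReal.coe_toReal hx.1 hx.2]
      _ ≤ ((c - α * ‖w‖ ^ 2 : ℝ) : EReal) := EReal.coe_le_coe_iff.2 far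
      _ ≤ f w := by
        rw [EReal.coe_sub, EReal.sub_le_iff_le_add (.inl (EReal.coe_ne_bot _))
          (.inl (EReal.coe_ne_top _)), ← real_inner_self_eq_norm_sq]
        exact hpb w

lemma ProxSubgradOn.inner_sub_ge {r' : ℝ} {x' v' : E} (h : ProxSubgradOn f r x v {x'})
    (h' : ProxSubgradOn f r' x' v' {x}) (hx' : IsFiniteAt f x') :
    -((r + r') / 2 * ‖x - x'‖ ^ 2) ≤ ⟪v - v', x - x'⟫ := by
  have hx : IsFiniteAt f x := ⟨h.ne_top hx'.1, h'.ne_bot hx'.2⟩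
  have hle := h x' rfl
  have hle' := h' x rfl
  lift f x to ℝ using hx with a
  lift f x' to ℝ using hx' with a'
  norm_cast at hle hle'
  rw [← neg_sub x x', norm_neg, inner_neg_right] at hle
  rw [inner_sub_left]
  linarith

lemma ProxSubgradOn.norm_sub_le {r' : ℝ} {x' v' : E} (h : ProxSubgradOn f r x v {x'})
    (h' : ProxSubgradOn f r' x' v' {x}) (hx' : IsFiniteAt f x') (hγ : 0 ≤ γ) :
    (1 - γ * ((r + r') / 2)) * ‖x - x'‖ ≤ ‖(x + γ • v) - (x' + γ • v')‖ := by
  set d := x - x' with hd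
  rcases (norm_nonneg d).eq_or_lt with hd0 | hdpos
  · simp [← hd0]
  have hypomonotone := mul_le_mul_of_nonneg_left (h.inner_sub_ge h' hx') hγ
  refine le_of_mul_le_mul_right ?_ hdpos
  calc (1 - γ * ((r + r') / 2)) * ‖d‖ * ‖d‖
    _ = ⟪d, d⟫ + γ * -((r + r') / 2 * ‖d‖ ^ 2) := by rw [real_inner_self_eq_norm_sq]; ring
    _ ≤ ⟪d, d⟫ + γ * ⟪v - v', d⟫ := by gcongr
    _ = ⟪(x + γ • v) - (x' + γ • v'), d⟫ := by
      rw [← real_inner_smul_left, ← inner_add_left, hd, smul_sub]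
      congr 1
      abel
    _ ≤ ‖(x + γ • v) - (x' + γ • v')‖ * ‖d‖ := real_inner_le_norm _ _

lemma ProxSubgradOn.norm_sub_le_of_prox_objective_le (h : ProxSubgradOn f R x v Set.univ)
    (hx : IsFiniteAt f x) (hγ : 0 < γ) (hw : ProxSubgradOn f γ⁻¹ w (γ⁻¹ • (z - w)) {x}) :
    (1 - γ * R) / 2 * ‖w - x‖ ≤ ‖z - (x + γ • v)‖ := by
  have key := hw.norm_sub_le (h.mono (Set.subset_univ {w})) hx hγ.le
  rw [smul_inv_smul₀ hγ.ne', add_sub_cancel] at key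
  convert key using 2
  field_simp
  ring

lemma ProxSubgradOn.proxSet_nonempty [ProperSpace E] (hlsc : LowerSemicontinuous f)
    (h : ProxSubgradOn f R x v Set.univ) (hx : IsFiniteAt f x) (hγ : 0 < γ) (hγR : γ * R < 1)
    (z : E) : (proxSet (inner ℝ) f γ z).Nonempty := by
  set φ : E → EReal := fun w => f w + ((1 / (2 * γ) * ⟪w - z, w - z⟫ : ℝ) : EReal)
  have φ_lsc : LowerSemicontinuous φ := by
    refine hlsc.add' (Continuous.lowerSemicontinuous ?_) fun w =>
      EReal.continuousAt_add (.inr (EReal.coe_ne_bot _)) (.inr (EReal.coe_ne_top _))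
    exact continuous_coe_real_ereal.comp (by fun_prop)
  set ρ := ‖z - (x + γ • v)‖ / ((1 - γ * R) / 2)
  have sublevel_subset : ∀ w, φ w ≤ φ x → w ∈ Metric.closedBall x ρ := by
    intro w hw
    rw [mem_closedBall_iff_norm, le_div_iff₀' (by linarith)]
    exact h.norm_sub_le_of_prox_objective_le hx hγ ((prox_objective_le_iff hγ.ne').1 hw)
  have x_mem : x ∈ Metric.closedBall x ρ := sublevel_subset x le_rfl
  obtain ⟨w, -, hw⟩ := (φ_lsc.lowerSemicontinuousOn _).exists_isMinOn ⟨x, x_mem⟩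
    (isCompact_closedBall x ρ)
  refine ⟨w, fun w' => ?_⟩
  rcases le_total (φ w') (φ x) with hw' | hw'
  · exact hw (sublevel_subset w' hw')
  · exact (hw x_mem).trans hw'

lemma ProxSubgradOn.eventually_forall_mem_proxSet (h : ProxSubgradOn f R x v Set.univ)
    (hx : IsFiniteAt f x) (hγ : 0 < γ) (hγR : γ * R < 1) {q : E × E → Prop}
    (hq : ∀ᶠ p in 𝓝 (x + γ • v, x), q p) :
    ∀ᶠ z in 𝓝 (x + γ • v), ∀ w ∈ proxSet (inner ℝ) f γ z, q (z, w) := by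
  obtain ⟨δ, hδ, hball⟩ := Metric.eventually_nhds_iff.1 hq
  have hκ : 0 < (1 - γ * R) / 2 := by linarith
  filter_upwards [Metric.ball_mem_nhds (x + γ • v) hδ,
    Metric.ball_mem_nhds (x + γ • v) (mul_pos hκ hδ)] with z hz hzκ w hw
  refine hball (max_lt hz ?_)
  rw [mem_ball_iff_norm] at hzκ
  rw [mem_proxSet_iff_proxSubgradOn hγ.ne'] at hw
  rw [dist_eq_norm]
  exact lt_of_mul_lt_mul_left ((h.norm_sub_le_of_prox_objective_le hx hγ
    (hw.mono (Set.subset_univ {x}))).trans_lt hzκ) hκ.le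

lemma eventually_lt_prox_gap (x v : E) (γ : ℝ) {ε : ℝ} (hε : 0 < ε) :
    ∀ᶠ p : E × E in 𝓝 (x + γ • v, x),
      -ε < ⟪γ⁻¹ • (p.1 - p.2), x - p.2⟫ - γ⁻¹ / 2 * ‖x - p.2‖ ^ 2 := by
  have hc : Continuous fun p : E × E =>
      ⟪γ⁻¹ • (p.1 - p.2), x - p.2⟫ - γ⁻¹ / 2 * ‖x - p.2‖ ^ 2 := by fun_prop
  exact hc.continuousAt.eventually_const_lt (by simpa using hε)

lemma ProxRegularAtFor.exists_forall_proxSubgradOn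
    (h : ProxRegularAtFor (inner ℝ) f x v) :
    ∃ ε > 0, ∃ r : ℝ, ∀ x₁ v₁, LimSubgrad (inner ℝ) f x₁ v₁ → ‖x₁ - x‖ < ε →
      ‖v₁ - v‖ < ε → f x₁ < f x + (ε : EReal) → ProxSubgradOn f r x₁ v₁ (Metric.ball x ε) := by
  obtain ⟨-, -, ε, hε, r, -, h⟩ := h
  simp only [nrm_inner, real_inner_self_eq_norm_sq] at h
  refine ⟨ε, hε, r, fun x₁ v₁ hv₁ hx₁ hv hf x' hx' => h x₁ v₁ hv₁ hx₁ hv hf x' ?_⟩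
  rwa [← mem_ball_iff_norm]

lemma ProxSubgradOn.eventually_proxSubgradOn_of_mem_proxSet {ε : ℝ}
    (h : ProxSubgradOn f R x v Set.univ) (hx : IsFiniteAt f x) (hγ : 0 < γ) (hγR : γ * R < 1)
    (hε : 0 < ε)
    (hreg : ∀ x₁ v₁, LimSubgrad (inner ℝ) f x₁ v₁ → ‖x₁ - x‖ < ε →
      ‖v₁ - v‖ < ε → f x₁ < f x + (ε : EReal) → ProxSubgradOn f r x₁ v₁ (Metric.ball x ε)) :
    ∀ᶠ z in 𝓝 (x + γ • v), ∀ w ∈ proxSet (inner ℝ) f γ z,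
      w ∈ Metric.ball x ε ∧ IsFiniteAt f w ∧
        ProxSubgradOn f r w (γ⁻¹ • (z - w)) (Metric.ball x ε) := by
  have near_x : ∀ᶠ p : E × E in 𝓝 (x + γ • v, x), ‖p.2 - x‖ < ε :=
    ContinuousAt.eventually_lt (by fun_prop) continuousAt_const (by simpa using hε)
  have near_v : ∀ᶠ p : E × E in 𝓝 (x + γ • v, x), ‖γ⁻¹ • (p.1 - p.2) - v‖ < ε :=
    ContinuousAt.eventually_lt (by fun_prop) continuousAt_const (by simpa [hγ.ne'] using hε)
  filter_upwards [h.eventually_forall_mem_proxSet hx hγ hγR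
    (near_x.and (near_v.and (eventually_lt_prox_gap x v γ hε)))] with z hz w hw
  obtain ⟨hwx, hwv, hgap⟩ := hz w hw
  rw [mem_proxSet_iff_proxSubgradOn hγ.ne'] at hw
  have hfw : IsFiniteAt f w :=
    ⟨(hw.mono (Set.subset_univ {x})).ne_top hx.1, (h.mono (Set.subset_univ {w})).ne_bot hx.2⟩
  refine ⟨mem_ball_iff_norm.2 hwx, hfw,
    hreg w _ (hw.regSubgrad hfw).limSubgrad hwx hwv ?_⟩
  have hle := hw x trivial
  lift f w to ℝ using hfw with b
  lift f x to ℝ using hx with a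
  norm_cast at hle ⊢
  linarith

theorem ProxRegularAtFor.eventually_exists_lipschitzOnWith_prox [ProperSpace E]
    (hlsc : LowerSemicontinuous f) (hpb : ProxBounded (inner ℝ) f)
    (hv : LimSubgrad (inner ℝ) f x v)
    (hpr : ProxRegularAtFor (inner ℝ) f x v) :
    ∀ᶠ γ in 𝓝[>] (0 : ℝ), ∃ V ∈ 𝓝 (x + γ • v), ∃ P : E → E, ∃ K,
      (∀ z ∈ V, proxSet (inner ℝ) f γ z = {P z}) ∧ LipschitzOnWith K P V := by
  have hx : IsFiniteAt f x := hpr.1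
  obtain ⟨ε, hε, r, hreg⟩ := hpr.exists_forall_proxSubgradOn
  have hlocal : ProxSubgradOn f r x v (Metric.ball x ε) := by
    refine hreg x v hv (by simpa using hε) (by simpa using hε) ?_
    lift f x to ℝ using hx with a
    norm_cast
    linarith
  obtain ⟨R, hrR, hglobal⟩ := hpb.exists_proxSubgradOn_univ hx hε hlocal
  have small : ∀ᶠ γ in 𝓝[>] (0 : ℝ), γ * R < 1 := nhdsWithin_le_nhds <|
    ContinuousAt.eventually_lt (by fun_prop) continuousAt_const (by simp)
  filter_upwards [self_mem_nhdsWithin, small] with γ (hγ : 0 < γ) hγR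
  choose P hP using hglobal.proxSet_nonempty hlsc hx hγ hγR
  have hκ : 0 < 1 - γ * r := by nlinarith
  set V := {z | ∀ w ∈ proxSet (inner ℝ) f γ z, w ∈ Metric.ball x ε ∧
    IsFiniteAt f w ∧ ProxSubgradOn f r w (γ⁻¹ • (z - w)) (Metric.ball x ε)}
  have lipschitz : ∀ z ∈ V, ∀ z' ∈ V, ∀ w ∈ proxSet (inner ℝ) f γ z,
      ∀ w' ∈ proxSet (inner ℝ) f γ z', (1 - γ * r) * ‖w - w'‖ ≤ ‖z - z'‖ := by
    intro z hz z' hz' w hw w' hw'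
    obtain ⟨hwx, -, hwsub⟩ := hz w hw
    obtain ⟨hwx', hfin, hwsub'⟩ := hz' w' hw'
    simpa [smul_inv_smul₀ hγ.ne'] using (hwsub.mono (Set.singleton_subset_iff.2 hwx')).norm_sub_le
      (hwsub'.mono (Set.singleton_subset_iff.2 hwx)) hfin hγ.le
  refine ⟨V, hglobal.eventually_proxSubgradOn_of_mem_proxSet hx hγ hγR hε hreg, P,
    (1 - γ * r)⁻¹.toNNReal, fun z hz => ?_, LipschitzOnWith.of_dist_le_mul fun z hz z' hz' => ?_⟩
  · refine Set.eq_singleton_iff_unique_mem.2 ⟨hP z, fun w hw => ?_⟩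
    have := lipschitz z hz z hz w hw (P z) (hP z)
    rw [sub_self, norm_zero, mul_nonpos_iff_pos_imp_nonpos] at this
    exact sub_eq_zero.1 (norm_le_zero_iff.1 (this.1 hκ))
  · rw [dist_eq_norm, dist_eq_norm, Real.coe_toNNReal _ (by positivity), inv_mul_eq_div,
      le_div_iff₀' hκ]
    exact lipschitz z hz z' hz' _ (hP z) _ (hP z')

end InnerProductSpace

section Isometry

variable {F 𝓕 : Type*} [AddCommGroup E] [AddCommGroup F] [FunLike 𝓕 E F] [AddMonoidHomClass 𝓕 E F]
  {ip : E → E → ℝ} {ip' : F → F → ℝ} {f : E → EReal} {f' : F → EReal} {T : 𝓕} {γ : ℝ} {u w : E}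

lemma mem_proxSet_iff_forall_map_le (hip : ∀ a b, ip' (T a) (T b) = ip a b)
    (hf : ∀ a, f' (T a) = f a) :
    w ∈ proxSet ip f γ u ↔ ∀ w',
      f' (T w) + ((1 / (2 * γ) * ip' (T w - T u) (T w - T u) : ℝ) : EReal) ≤
        f' (T w') + ((1 / (2 * γ) * ip' (T w' - T u) (T w' - T u) : ℝ) : EReal) := by
  simp only [← map_sub, hip, hf]
  rfl

lemma mem_proxSet_of_map_mem (hip : ∀ a b, ip' (T a) (T b) = ip a b)
    (hf : ∀ a, f' (T a) = f a) (hw : T w ∈ proxSet ip' f' γ (T u)) : w ∈ proxSet ip f γ u :=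
  (mem_proxSet_iff_forall_map_le hip hf).2 fun w' => hw (T w')

lemma map_mem_proxSet_iff (hip : ∀ a b, ip' (T a) (T b) = ip a b) (hf : ∀ a, f' (T a) = f a)
    (hT : Function.Surjective T) : T w ∈ proxSet ip' f' γ (T u) ↔ w ∈ proxSet ip f γ u :=
  (hT.forall).trans (mem_proxSet_iff_forall_map_le hip hf).symm

lemma proxSet_eq_singleton_of_map (hip : ∀ a b, ip' (T a) (T b) = ip a b)
    (hf : ∀ a, f' (T a) = f a) (hT : Function.Injective T)
    (hw : proxSet ip' f' γ (T u) = {T w}) : proxSet ip f γ u = {w} := by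
  have hTw : T w ∈ proxSet ip' f' γ (T u) := hw ▸ Set.mem_singleton (T w)
  refine Set.eq_singleton_iff_unique_mem.2
    ⟨mem_proxSet_of_map_mem hip hf hTw, fun w' hw' => hT ?_⟩
  have hTw' : T w' ∈ proxSet ip' f' γ (T u) := fun a =>
    ((mem_proxSet_iff_forall_map_le hip hf).1 hw' w).trans (hTw a)
  rwa [hw] at hTw'

end Isometry

/-! ### Spectral functions and orthogonal conjugation -/

section SymmetricMatrices

variable {n : ℕ} {θ : (Fin n → ℝ) → EReal} {γ : ℝ} {Q U : Matrix (Fin n) (Fin n) ℝ}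

lemma isSymm_mul_mul_transpose {ι κ : Type*} [Fintype κ] {A : Matrix κ κ ℝ} (hA : A.IsSymm)
    (Q : Matrix ι κ ℝ) : (Q * A * Qᵀ).IsSymm := by
  rw [Matrix.IsSymm, transpose_mul, transpose_mul, transpose_transpose, hA, Matrix.mul_assoc]

/-- Conjugation `A ↦ Q A Qᵀ` as a linear endomorphism of the space of symmetric matrices. -/
def conjSym (Q : Matrix (Fin n) (Fin n) ℝ) : Sym n →ₗ[ℝ] Sym n where
  toFun A := ⟨Q * A.val * Qᵀ, isSymm_mul_mul_transpose A.property Q⟩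
  map_add' A B := Subtype.ext (by simp [Matrix.mul_add, Matrix.add_mul])
  map_smul' c A := Subtype.ext (by simp)

/-- The linear map `u ↦ U Diag(u) Uᵀ`. -/
def spectralLift (U : Matrix (Fin n) (Fin n) ℝ) : (Fin n → ℝ) →ₗ[ℝ] Sym n where
  toFun u := conjSym U (diagSym u)
  map_add' u w := by
    rw [← map_add]
    exact congrArg _ (Subtype.ext (Matrix.diagonal_add u w).symm)
  map_smul' c u := by
    rw [RingHom.id_apply, ← map_smul]
    exact congrArg _ (Subtype.ext (Matrix.diagonal_smul c u))

/-- The diagonal of `Uᵀ A U`; for orthogonal `U` a linear left inverse of `spectralLift U`. -/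
def spectralCoord (U : Matrix (Fin n) (Fin n) ℝ) : Sym n →ₗ[ℝ] Fin n → ℝ where
  toFun A := (conjSym Uᵀ A).val.diag
  map_add' A B := by simp
  map_smul' c A := by simp

lemma coe_conjSym (Q : Matrix (Fin n) (Fin n) ℝ) (A : Sym n) :
    (conjSym Q A).val = Q * A.val * Qᵀ := rfl

lemma coe_spectralLift (U : Matrix (Fin n) (Fin n) ℝ) (u : Fin n → ℝ) :
    (spectralLift U u).val = U * Matrix.diagonal u * Uᵀ := rfl

lemma spectralLift_apply (U : Matrix (Fin n) (Fin n) ℝ) (u : Fin n → ℝ) :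
    spectralLift U u = conjSym U (diagSym u) := rfl

lemma spectralCoord_apply (U : Matrix (Fin n) (Fin n) ℝ) (A : Sym n) :
    spectralCoord U A = (conjSym Uᵀ A).val.diag := rfl

lemma conjSym_conjSym (Q R : Matrix (Fin n) (Fin n) ℝ) (A : Sym n) :
    conjSym Q (conjSym R A) = conjSym (Q * R) A := by
  apply Subtype.ext
  simp only [coe_conjSym, Matrix.transpose_mul, Matrix.mul_assoc]

lemma conjSym_one (A : Sym n) : conjSym 1 A = A := by
  apply Subtype.ext
  simp [coe_conjSym]

lemma conjSym_conjSym_transpose (hQ : Q ∈ orthogonalGroup (Fin n) ℝ) (A : Sym n) :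
    conjSym Q (conjSym Qᵀ A) = A := by
  rw [conjSym_conjSym, (mem_orthogonalGroup_iff _ _).1 hQ, conjSym_one]

lemma conjSym_transpose_conjSym (hQ : Q ∈ orthogonalGroup (Fin n) ℝ) (A : Sym n) :
    conjSym Qᵀ (conjSym Q A) = A := by
  rw [conjSym_conjSym, (mem_orthogonalGroup_iff' _ _).1 hQ, conjSym_one]

lemma spectralCoord_spectralLift (hU : U ∈ orthogonalGroup (Fin n) ℝ) (u : Fin n → ℝ) :
    spectralCoord U (spectralLift U u) = u := by
  rw [spectralCoord_apply, spectralLift_apply, conjSym_transpose_conjSym hU]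
  exact Matrix.diag_diagonal u

lemma ipM_conjSym (hQ : Q ∈ orthogonalGroup (Fin n) ℝ) (A B : Sym n) :
    ipM (conjSym Q A) (conjSym Q B) = ipM A B := by
  have hQ' : Qᵀ * Q = 1 := (mem_orthogonalGroup_iff' _ _).1 hQ
  calc (Q * A.val * Qᵀ * (Q * B.val * Qᵀ)).trace
    _ = (Q * (A.val * (Qᵀ * Q) * B.val * Qᵀ)).trace := by simp only [Matrix.mul_assoc]
    _ = (A.val * (Qᵀ * Q) * B.val * (Qᵀ * Q)).trace := by
      rw [Matrix.trace_mul_comm]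
      simp only [Matrix.mul_assoc]
    _ = (A.val * B.val).trace := by simp only [hQ', Matrix.mul_one]

lemma ipM_spectralLift (hU : U ∈ orthogonalGroup (Fin n) ℝ) (u w : Fin n → ℝ) :
    ipM (spectralLift U u) (spectralLift U w) = ipV u w := by
  rw [spectralLift_apply, spectralLift_apply, ipM_conjSym hU]
  simp [ipM, ipV, diagSym]

lemma isHermitian_coe_s16 (A : Sym n) : A.val.IsHermitian :=
  (Matrix.conjTranspose_eq_transpose_of_trivial A.val).trans A.property

lemma eigval_conjSym (hQ : Q ∈ orthogonalGroup (Fin n) ℝ) (A : Sym n) :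
    eigval (conjSym Q A).val = eigval A.val := by
  have h : (isHermitian_coe_s16 (conjSym Q A)).eigenvalues = (isHermitian_coe_s16 A).eigenvalues := by
    rw [Matrix.IsHermitian.eigenvalues_eq_eigenvalues_iff, coe_conjSym, Matrix.charpoly_mul_comm,
      ← Matrix.mul_assoc, (mem_orthogonalGroup_iff' _ _).1 hQ, Matrix.one_mul]
  rw [eigval, eigval, dif_pos (isHermitian_coe_s16 (conjSym Q A)), dif_pos (isHermitian_coe_s16 A), h]

lemma specFn_conjSym (hQ : Q ∈ orthogonalGroup (Fin n) ℝ) (A : Sym n) :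
    specFn θ (conjSym Q A) = specFn θ A :=
  congrArg θ (eigval_conjSym hQ A)

lemma exists_perm_comp_eq {ι α : Type*} [Fintype ι] {u w : ι → α}
    (h : Multiset.map u Finset.univ.val = Multiset.map w Finset.univ.val) :
    ∃ σ : Equiv.Perm ι, u ∘ σ = w := by
  classical
  have card_fiber : ∀ a, Fintype.card {i // w i = a} = Fintype.card {i // u i = a} := by
    intro a
    have := congrArg (Multiset.count a) h
    simp only [Multiset.count_map, eq_comm (a := a)] at this
    rw [Fintype.card_subtype, Fintype.card_subtype]
    exact this.symm
  exact ⟨Equiv.ofFiberEquiv fun a => Fintype.equivOfCardEq (card_fiber a),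
    funext (Equiv.ofFiberEquiv_map _)⟩

lemma exists_perm_eigval_diagonal (u : Fin n → ℝ) :
    ∃ σ : Equiv.Perm (Fin n), eigval (Matrix.diagonal u) = u ∘ σ := by
  have hH : (Matrix.diagonal u).IsHermitian := isHermitian_coe_s16 (diagSym u)
  have roots : (Matrix.diagonal u).charpoly.roots = Multiset.map u Finset.univ.val := by
    rw [Matrix.charpoly_diagonal, Polynomial.roots_prod _ _
      (Finset.prod_ne_zero_iff.2 fun i _ => Polynomial.X_sub_C_ne_zero (u i))]
    simp
  obtain ⟨σ, hσ⟩ := exists_perm_comp_eq (roots.symm.trans hH.roots_charpoly_eq_eigenvalues)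
  refine ⟨(Tuple.sort fun j => -hH.eigenvalues j).trans σ, ?_⟩
  rw [eigval, dif_pos hH, Equiv.coe_trans, ← Function.comp_assoc, hσ]
  rfl

lemma specFn_spectralLift (hsym : SymmetricFn θ) (hU : U ∈ orthogonalGroup (Fin n) ℝ)
    (u : Fin n → ℝ) : specFn θ (spectralLift U u) = θ u := by
  obtain ⟨σ, hσ⟩ := exists_perm_eigval_diagonal u
  calc specFn θ (spectralLift U u)
    _ = specFn θ (diagSym u) := specFn_conjSym hU (diagSym u)
    _ = θ (u ∘ σ) := congrArg θ hσ
    _ = θ u := hsym u σ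

lemma conjSym_surjective (hQ : Q ∈ orthogonalGroup (Fin n) ℝ) :
    Function.Surjective (conjSym Q) :=
  fun A => ⟨conjSym Qᵀ A, conjSym_conjSym_transpose hQ A⟩

lemma conjSym_eq_self_of_proxSet_eq_singleton (hQ : Q ∈ orthogonalGroup (Fin n) ℝ)
    {A W : Sym n} (hW : proxSet ipM (specFn θ) γ A = {W}) (hA : conjSym Q A = A) :
    conjSym Q W = W := by
  have hmem : conjSym Q W ∈ proxSet ipM (specFn θ) γ (conjSym Q A) :=
    (map_mem_proxSet_iff (ipM_conjSym hQ) (specFn_conjSym hQ) (conjSym_surjective hQ)).2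
      (hW ▸ Set.mem_singleton W)
  rwa [hA, hW] at hmem

lemma isDiag_of_forall_sign_conj {ι : Type*} [Fintype ι] [DecidableEq ι] {M : Matrix ι ι ℝ}
    (h : ∀ s : ι → ℝ, (∀ k, s k * s k = 1) → diagonal s * M * diagonal s = M) : M.IsDiag := by
  intro i j hij
  have := congrFun₂ (h (Function.update 1 i (-1)) fun k => by
    rcases eq_or_ne k i with rfl | hk <;> simp [*]) i j
  rw [mul_diagonal, diagonal_mul, Function.update_self, Function.update_of_ne hij.symm] at this
  simp only [Pi.one_apply, mul_one, neg_one_mul] at this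
  linarith

lemma isDiag_of_proxSet_diagSym_eq_singleton {u : Fin n → ℝ} {W : Sym n}
    (hW : proxSet ipM (specFn θ) γ (diagSym u) = {W}) : W.val.IsDiag := by
  refine isDiag_of_forall_sign_conj fun s hs => ?_
  have orth : diagonal s ∈ orthogonalGroup (Fin n) ℝ := by
    rw [mem_orthogonalGroup_iff, diagonal_transpose, diagonal_mul_diagonal, funext hs]
    exact diagonal_one
  have fixes : conjSym (diagonal s) (diagSym u) = diagSym u := by
    apply Subtype.ext
    simp only [coe_conjSym, diagSym, diagonal_transpose, diagonal_mul_diagonal]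
    congr 1
    funext k
    rw [mul_right_comm, hs, one_mul]
  simpa only [coe_conjSym, diagonal_transpose] using
    congrArg Subtype.val (conjSym_eq_self_of_proxSet_eq_singleton orth hW fixes)

lemma eq_spectralLift_spectralCoord_of_proxSet_eq_singleton (hU : U ∈ orthogonalGroup (Fin n) ℝ)
    {u : Fin n → ℝ} {W : Sym n} (hW : proxSet ipM (specFn θ) γ (spectralLift U u) = {W}) :
    spectralLift U (spectralCoord U W) = W := by
  have hW' : proxSet ipM (specFn θ) γ (diagSym u) = {conjSym Uᵀ W} := by
    refine proxSet_eq_singleton_of_map (ipM_conjSym hU) (specFn_conjSym hU)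
      (Function.LeftInverse.injective (conjSym_transpose_conjSym hU)) ?_
    rwa [conjSym_conjSym_transpose hU]
  have hdiag : diagSym (spectralCoord U W) = conjSym Uᵀ W :=
    Subtype.ext (isDiag_of_proxSet_diagSym_eq_singleton hW').diagonal_diag
  rw [spectralLift_apply, hdiag, conjSym_conjSym_transpose hU]

theorem proxSet_eq_singleton_spectralCoord (hsym : SymmetricFn θ)
    (hU : U ∈ orthogonalGroup (Fin n) ℝ) {u : Fin n → ℝ} {W : Sym n}
    (hW : proxSet ipM (specFn θ) γ (spectralLift U u) = {W}) :
    proxSet ipV θ γ u = {spectralCoord U W} := by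
  refine proxSet_eq_singleton_of_map (ipM_spectralLift hU) (specFn_spectralLift hsym hU)
    (Function.LeftInverse.injective (spectralCoord_spectralLift hU)) ?_
  rw [eq_spectralLift_spectralCoord_of_proxSet_eq_singleton hU hW, hW]

end SymmetricMatrices

/-! ### One-sided derivatives along curves -/

section OneSidedDeriv

variable [NormedAddCommGroup E] [NormedSpace ℝ E]

lemma hasDerivWithinAt_Ioi_zero_iff_tendsto {c : ℝ → E} {c' : E} :
    HasDerivWithinAt c c' (Set.Ioi 0) 0 ↔
      Tendsto (fun t : ℝ => t⁻¹ • (c t - c 0)) (𝓝[>] 0) (𝓝 c') := by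
  rw [hasDerivWithinAt_iff_tendsto_slope' Set.self_notMem_Ioi, slope_fun_def]
  simp only [sub_zero, vsub_eq_sub]

lemma proxSingleDirDiff_iff {ip : E → E → ℝ} {f : E → EReal} {γ : ℝ} {z : E} :
    ProxSingleDirDiff ip f γ z ↔ ∃ V ∈ 𝓝 z, ∃ P : E → E, (∀ u ∈ V, proxSet ip f γ u = {P u}) ∧
      ∀ h, ∃ L, HasDerivWithinAt (fun t : ℝ => P (z + t • h)) L (Set.Ioi 0) 0 := by
  simp only [hasDerivWithinAt_Ioi_zero_iff_tendsto, zero_smul, add_zero]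
  rfl

-- A Lipschitz map cannot distinguish two curves that agree to first order.
lemma hasDerivWithinAt_line_of_lipschitzOnWith {F : Type*} [NormedAddCommGroup F]
    [NormedSpace ℝ F] {P : E → F} {V : Set E} {K : NNReal} {c : ℝ → E} {H : E} {L : F}
    (hP : LipschitzOnWith K P V) (hV : V ∈ 𝓝 (c 0))
    (hc : HasDerivWithinAt c H (Set.Ioi 0) 0)
    (hPc : HasDerivWithinAt (P ∘ c) L (Set.Ioi 0) 0) :
    HasDerivWithinAt (fun t : ℝ => P (c 0 + t • H)) L (Set.Ioi 0) 0 := by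
  have hline : Tendsto (fun t : ℝ => c 0 + t • H) (𝓝[>] 0) (𝓝 (c 0)) := by
    have : ContinuousAt (fun t : ℝ => c 0 + t • H) 0 := by fun_prop
    simpa using this.tendsto.mono_left nhdsWithin_le_nhds
  have hcurve : Tendsto c (𝓝[>] 0) (𝓝 (c 0)) := hc.continuousWithinAt
  rw [hasDerivWithinAt_iff_isLittleO] at hc hPc ⊢
  have close : (fun t : ℝ => P (c 0 + t • H) - P (c t)) =o[𝓝[>] 0] fun t => t - 0 := by
    refine Asymptotics.IsBigO.trans_isLittleO (Asymptotics.IsBigO.of_bound K ?_) hc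
    filter_upwards [hline hV, hcurve hV] with t ht ht'
    calc ‖P (c 0 + t • H) - P (c t)‖
      _ ≤ K * ‖c 0 + t • H - c t‖ := hP.norm_sub_le ht ht'
      _ = K * ‖c t - c 0 - (t - 0) • H‖ := by rw [norm_sub_rev, sub_zero, sub_sub]
  refine (close.add hPc).congr_left fun t => ?_
  simp only [Function.comp_apply, zero_smul, add_zero]
  abel

end OneSidedDeriv

/-! ### First-order perturbation of spectral decompositions -/

section Perturbation

variable {ι κ : Type*}

lemma submatrix_sigmaFiberEquiv [DecidableEq κ] {z : ι → κ} {B : Matrix ι ι ℝ}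
    (hB : ∀ i j, z i ≠ z j → B i j = 0) :
    B.submatrix (Equiv.sigmaFiberEquiv z) (Equiv.sigmaFiberEquiv z) =
      blockDiagonal' fun v => B.submatrix (fun i : {i // z i = v} => i.1) fun i => i.1 := by
  ext ⟨v, i, rfl⟩ ⟨w, j, hj⟩
  by_cases hvw : z i = w
  · subst hvw
    rw [blockDiagonal'_apply_eq]
    rfl
  · rw [blockDiagonal'_apply_ne _ _ _ hvw]
    exact hB i j (hj ▸ hvw)

variable [Fintype ι] [DecidableEq ι]

lemma exists_orthogonal_diagonalization {A : Matrix ι ι ℝ} (hA : A.IsSymm) :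
    ∃ Q ∈ orthogonalGroup ι ℝ, ∃ d, A = Q * diagonal d * Qᵀ := by
  have hH : A.IsHermitian := (conjTranspose_eq_transpose_of_trivial A).trans hA
  refine ⟨hH.eigenvectorUnitary, hH.eigenvectorUnitary.2, hH.eigenvalues, ?_⟩
  exact hH.spectral_theorem.trans (Unitary.conjStarAlgAut_apply _ _)

lemma exists_block_orthogonal_diagonalization [Finite κ] {z : ι → κ}
    {B : Matrix ι ι ℝ} (hsymm : B.IsSymm) (hB : ∀ i j, z i ≠ z j → B i j = 0) :
    ∃ Q ∈ orthogonalGroup ι ℝ, (∀ i j, z i ≠ z j → Q i j = 0) ∧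
      ∃ d, B = Q * diagonal d * Qᵀ := by
  classical
  have := Fintype.ofFinite κ
  let e := Equiv.sigmaFiberEquiv z
  choose R hR c hc using fun v : κ =>
    exists_orthogonal_diagonalization (hsymm.submatrix fun i : {i // z i = v} => i.1)
  let Q := (blockDiagonal' R).submatrix e.symm e.symm
  have hQT : Qᵀ = (blockDiagonal' fun v => (R v)ᵀ).submatrix e.symm e.symm := by
    rw [← blockDiagonal'_transpose, transpose_submatrix]
  refine ⟨Q, ?_, fun i j hij => blockDiagonal'_apply_ne R ⟨i, rfl⟩ ⟨j, rfl⟩ hij,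
    (fun k => c k.1 k.2) ∘ e.symm, ?_⟩
  · have hRR : (fun v => R v * (R v)ᵀ) = 1 :=
      funext fun v => (mem_orthogonalGroup_iff _ _).1 (hR v)
    rw [mem_orthogonalGroup_iff, hQT, submatrix_mul_equiv, ← blockDiagonal'_mul, hRR,
      blockDiagonal'_one, submatrix_one_equiv]
  · calc B
      _ = (B.submatrix e e).submatrix e.symm e.symm := by simp
      _ = (blockDiagonal' fun v => R v * diagonal (c v) * (R v)ᵀ).submatrix e.symm e.symm := by
        rw [submatrix_sigmaFiberEquiv hB, funext hc]
      _ = Q * diagonal ((fun k => c k.1 k.2) ∘ e.symm) * Qᵀ := by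
        rw [hQT, blockDiagonal'_mul, blockDiagonal'_mul, blockDiagonal'_diagonal,
          ← submatrix_diagonal_equiv, submatrix_mul_equiv, submatrix_mul_equiv]

lemma exists_skew_commutator_diagonal_eq {z : ι → ℝ} {A : Matrix ι ι ℝ} (hA : A.IsSymm)
    (hAz : ∀ i j, z i = z j → A i j = 0) :
    ∃ K : Matrix ι ι ℝ, Kᵀ = -K ∧ K * diagonal z - diagonal z * K = A := by
  -- The commutator has entries `K i j * (z j - z i)`; if `z i = z j`, then `A i j / 0 = 0`.
  refine ⟨of fun i j => A i j / (z j - z i), ?_, ?_⟩ <;> ext i j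
  · simp only [transpose_apply, of_apply, Matrix.neg_apply, hA.apply j i]
    rw [← div_neg, neg_sub]
  · rw [Matrix.sub_apply, mul_diagonal, diagonal_mul, of_apply]
    by_cases hij : z i = z j
    · simp [hAz i j hij]
    · have : z j - z i ≠ 0 := sub_ne_zero.2 (Ne.symm hij)
      field_simp

lemma mul_diagonal_comm_of_apply_eq_zero {z : ι → ℝ} {Q : Matrix ι ι ℝ}
    (hQ : ∀ i j, z i ≠ z j → Q i j = 0) : Q * diagonal z = diagonal z * Q := by
  ext i j
  rw [mul_diagonal, diagonal_mul]
  by_cases hij : z i = z j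
  · rw [hij, mul_comm]
  · rw [hQ i j hij, zero_mul, mul_zero]

lemma exists_commutator_add_diagonalization_eq (z : ι → ℝ) {H : Matrix ι ι ℝ} (hH : H.IsSymm) :
    ∃ K : Matrix ι ι ℝ, Kᵀ = -K ∧ ∃ Q ∈ orthogonalGroup ι ℝ, ∃ d : ι → ℝ,
      Q * diagonal z * Qᵀ = diagonal z ∧
      K * diagonal z - diagonal z * K + Q * diagonal d * Qᵀ = H := by
  let B : Matrix ι ι ℝ := of fun i j => if z i = z j then H i j else 0
  have hB : B.IsSymm := by ext i j; simp [B, hH.apply i j, eq_comm]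
  obtain ⟨K, hK, hKB⟩ := exists_skew_commutator_diagonal_eq (z := z) (hH.sub hB) fun i j hij => by
    simp [B, hij]
  obtain ⟨Q, hQ, hQz, d, hd⟩ :=
    exists_block_orthogonal_diagonalization (z := Set.rangeFactorization z) hB fun i j hij =>
      if_neg fun h => hij (Subtype.ext h)
  have hQz' : Q * diagonal z = diagonal z * Q :=
    mul_diagonal_comm_of_apply_eq_zero fun i j hij => hQz i j fun h =>
      hij (congrArg Subtype.val h)
  refine ⟨K, hK, Q, hQ, d, ?_, by rw [hKB, ← hd, sub_add_cancel]⟩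
  rw [hQz', Matrix.mul_assoc, (mem_orthogonalGroup_iff _ _).1 hQ, Matrix.mul_one]

end Perturbation

section FrobeniusNorm

open scoped Matrix.Norms.Frobenius

variable {n : ℕ} {θ : (Fin n → ℝ) → EReal} {γ : ℝ} {U : Matrix (Fin n) (Fin n) ℝ}

lemma hasDerivWithinAt_of_coe {F : Type*} [NormedAddCommGroup F] [NormedSpace ℝ F]
    {p : Submodule ℝ F} {c : ℝ → p} {c' : p} {s : Set ℝ} {t : ℝ}
    (h : HasDerivWithinAt (fun r => (c r : F)) c' s t) : HasDerivWithinAt c c' s t :=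
  hasDerivWithinAt_iff_isLittleO.2 <|
    Asymptotics.IsLittleO.of_norm_left (hasDerivWithinAt_iff_isLittleO.1 h).norm_left

lemma exp_smul_mem_orthogonalGroup_s16 {ι : Type*} [Fintype ι] [DecidableEq ι] {K : Matrix ι ι ℝ}
    (hK : Kᵀ = -K) (t : ℝ) : NormedSpace.exp (t • K) ∈ orthogonalGroup ι ℝ := by
  rw [mem_orthogonalGroup_iff, ← exp_transpose, transpose_smul, hK, smul_neg, Matrix.exp_neg]
  exact mul_nonsing_inv _ ((isUnit_iff_isUnit_det _).1 (isUnit_exp _))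

lemma hasDerivAt_mul_exp_smul_mul {ι : Type*} [Fintype ι] [DecidableEq ι] (A K B : Matrix ι ι ℝ) :
    HasDerivAt (fun t : ℝ => A * NormedSpace.exp (t • K) * B) (A * K * B) 0 := by
  have hexp := hasDerivAt_exp_smul_const (𝕂 := ℝ) K 0
  rw [zero_smul, NormedSpace.exp_zero, Matrix.one_mul] at hexp
  exact (hexp.const_mul A).mul_const B

lemma hasDerivWithinAt_spectralLift {B : ℝ → Matrix (Fin n) (Fin n) ℝ}
    {B' : Matrix (Fin n) (Fin n) ℝ} {u : ℝ → Fin n → ℝ} {u' : Fin n → ℝ} {s : Set ℝ} {t : ℝ}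
    (hB : HasDerivWithinAt B B' s t) (hu : HasDerivWithinAt u u' s t) :
    HasDerivWithinAt (fun r => spectralLift (B r) (u r))
      (⟨B' * diagonal (u t) * (B t)ᵀ + (B' * diagonal (u t) * (B t)ᵀ)ᵀ,
        isSymm_add_transpose_self _⟩ + spectralLift (B t) u') s t := by
  apply hasDerivWithinAt_of_coe
  have hdiag : HasDerivWithinAt (fun r => diagonal (u r)) (diagonal u') s t :=
    (diagonalLinearMap (Fin n) ℝ ℝ).toContinuousLinearMap.hasFDerivAt.comp_hasDerivWithinAt t hu
  have htranspose : HasDerivWithinAt (fun r => (B r)ᵀ) B'ᵀ s t :=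
    (transposeLinearEquiv (Fin n) (Fin n) ℝ ℝ).toLinearMap.toContinuousLinearMap.hasFDerivAt
      |>.comp_hasDerivWithinAt t hB
  refine ((hB.mul hdiag).mul htranspose).congr_deriv ?_
  simp only [Pi.mul_apply, Submodule.coe_add, coe_spectralLift, transpose_mul, transpose_transpose,
    diagonal_transpose, Matrix.add_mul, Matrix.mul_assoc]
  abel

lemma exists_orthogonal_curve_hasDerivWithinAt (hU : U ∈ orthogonalGroup (Fin n) ℝ)
    (z : Fin n → ℝ) (H : Sym n) :
    ∃ B : ℝ → Matrix (Fin n) (Fin n) ℝ, (∀ t, B t ∈ orthogonalGroup (Fin n) ℝ) ∧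
      (∃ B', HasDerivAt B B' 0) ∧ spectralLift (B 0) z = spectralLift U z ∧
      ∃ d, HasDerivWithinAt (fun t : ℝ => spectralLift (B t) (z + t • d)) H (Set.Ioi 0) 0 := by
  obtain ⟨K, hK, Q, hQ, d, hQz, hH⟩ :=
    exists_commutator_add_diagonalization_eq z (conjSym Uᵀ H).property
  have hcurve := hasDerivAt_mul_exp_smul_mul U K Q
  have hline : HasDerivAt (fun t : ℝ => z + t • d) d 0 := by
    simpa using ((hasDerivAt_id (0 : ℝ)).smul_const d).const_add z
  refine ⟨fun t => U * NormedSpace.exp (t • K) * Q, fun t =>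
    mul_mem (mul_mem hU (exp_smul_mem_orthogonalGroup_s16 hK t)) hQ, ⟨_, hcurve⟩, ?_, d, ?_⟩
  · apply Subtype.ext
    simp only [coe_spectralLift, zero_smul, NormedSpace.exp_zero, Matrix.mul_one]
    rw [transpose_mul, ← Matrix.mul_assoc, Matrix.mul_assoc U, Matrix.mul_assoc U, hQz]
  · refine (hasDerivWithinAt_spectralLift hcurve.hasDerivWithinAt
      hline.hasDerivWithinAt).congr_deriv (Subtype.ext ?_)
    have hrot : U * K * Q * diagonal z * (U * Q)ᵀ = U * (K * diagonal z) * Uᵀ := by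
      conv_rhs => rw [← hQz]
      simp only [transpose_mul, Matrix.mul_assoc]
    have hrotT : (U * (K * diagonal z) * Uᵀ)ᵀ = -(U * (diagonal z * K) * Uᵀ) := by
      simp only [transpose_mul, transpose_transpose, diagonal_transpose, hK, Matrix.mul_neg,
        Matrix.neg_mul, Matrix.mul_assoc]
    rw [← conjSym_conjSym_transpose hU H, coe_conjSym, ← hH]
    simp only [Submodule.coe_add, coe_spectralLift, zero_smul, add_zero, NormedSpace.exp_zero,
      Matrix.mul_one, hrot, hrotT]
    simp only [transpose_mul, Matrix.mul_add, Matrix.mul_sub, Matrix.add_mul, Matrix.sub_mul,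
      Matrix.mul_assoc]
    abel

/-! ### Proximal mappings of spectral functions -/

lemma ipM_self (A : Sym n) : ipM A A = ‖A‖ ^ 2 := by
  rw [Submodule.coe_norm, frobenius_norm_def, ← Real.sqrt_eq_rpow, Real.sq_sqrt (by positivity)]
  simp only [ipM, trace, diag_apply, mul_apply, Real.norm_eq_abs, Real.rpow_two, sq_abs]
  exact Finset.sum_congr rfl fun i _ => Finset.sum_congr rfl fun j _ => by
    rw [A.property.apply i j, sq]

/-- The trace inner product as an inner product space structure whose norm is the Frobenius norm
and whose topology is therefore the entrywise one. -/
abbrev traceInnerProductSpace : InnerProductSpace ℝ (Sym n) where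
  inner := ipM
  norm_sq_eq_re_inner A := (ipM_self A).symm
  conj_inner_symm A B := trace_mul_comm B.val A.val
  add_left A B C := by simp only [ipM, Submodule.coe_add, Matrix.add_mul, trace_add]
  smul_left A B r := by simp only [ipM, Submodule.coe_smul, Matrix.smul_mul, trace_smul]; rfl

lemma eventually_exists_lipschitzOnWith_prox_sym {f : Sym n → EReal} {X Y : Sym n}
    (hlsc : LowerSemicontinuous f) (hpb : ProxBounded ipM f) (hY : LimSubgrad ipM f X Y)
    (hpr : ProxRegularAtFor ipM f X Y) :
    ∀ᶠ γ in 𝓝[>] (0 : ℝ), ∃ V ∈ 𝓝 (X + γ • Y), ∃ P : Sym n → Sym n, ∃ K,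
      (∀ Z ∈ V, proxSet ipM f γ Z = {P Z}) ∧ LipschitzOnWith K P V :=
  letI : InnerProductSpace ℝ (Sym n) := traceInnerProductSpace
  hpr.eventually_exists_lipschitzOnWith_prox hlsc hpb hY

lemma proxSingleDirDiff_of_specFn (hsym : SymmetricFn θ) (hU : U ∈ orthogonalGroup (Fin n) ℝ)
    {z : Fin n → ℝ} (h : ProxSingleDirDiff ipM (specFn θ) γ (spectralLift U z)) :
    ProxSingleDirDiff ipV θ γ z := by
  obtain ⟨V, hV, P, hP, hderiv⟩ := h
  have hlift : Continuous (spectralLift U) := LinearMap.continuous_of_finiteDimensional _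
  have hcoord : Continuous (spectralCoord U) := LinearMap.continuous_of_finiteDimensional _
  refine ⟨spectralLift U ⁻¹' V, hlift.continuousAt.preimage_mem_nhds hV,
    fun u => spectralCoord U (P (spectralLift U u)),
    fun u hu => proxSet_eq_singleton_spectralCoord hsym hU (hP _ hu), fun h => ?_⟩
  obtain ⟨L, hL⟩ := hderiv (spectralLift U h)
  refine ⟨spectralCoord U L, ((hcoord.tendsto L).comp hL).congr fun t => ?_⟩
  simp only [Function.comp_apply, map_smul, map_sub, map_add]

lemma eq_spectralLift_of_proxSet_eq_singleton (hsym : SymmetricFn θ)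
    (hU : U ∈ orthogonalGroup (Fin n) ℝ) {u w : Fin n → ℝ} {W : Sym n}
    (hW : proxSet ipM (specFn θ) γ (spectralLift U u) = {W}) (hw : proxSet ipV θ γ u = {w}) :
    W = spectralLift U w := by
  rw [proxSet_eq_singleton_spectralCoord hsym hU hW, Set.singleton_eq_singleton_iff] at hw
  rw [← hw, eq_spectralLift_spectralCoord_of_proxSet_eq_singleton hU hW]

lemma proxSingleDirDiff_specFn_of_lipschitzOnWith (hsym : SymmetricFn θ)
    (hU : U ∈ orthogonalGroup (Fin n) ℝ) {z : Fin n → ℝ} {V : Set (Sym n)} {P : Sym n → Sym n}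
    {K : NNReal} (hV : V ∈ 𝓝 (spectralLift U z))
    (hP : ∀ Z ∈ V, proxSet ipM (specFn θ) γ Z = {P Z}) (hK : LipschitzOnWith K P V)
    (h : ProxSingleDirDiff ipV θ γ z) :
    ProxSingleDirDiff ipM (specFn θ) γ (spectralLift U z) := by
  obtain ⟨V', hV', p, hp, hderiv⟩ := proxSingleDirDiff_iff.1 h
  refine proxSingleDirDiff_iff.2 ⟨V, hV, P, hP, fun H => ?_⟩
  obtain ⟨B, hB, ⟨B', hB'⟩, hB0, d, hc⟩ := exists_orthogonal_curve_hasDerivWithinAt hU z H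
  obtain ⟨ℓ, hℓ⟩ := hderiv d
  let c : ℝ → Sym n := fun t => spectralLift (B t) (z + t • d)
  have hc0 : c 0 = spectralLift U z := by simpa [c] using hB0
  have hVc : V ∈ 𝓝 (c 0) := hc0 ▸ hV
  have hPc : ∀ t, c t ∈ V → z + t • d ∈ V' → P (c t) = spectralLift (B t) (p (z + t • d)) :=
    fun t hct hzt => eq_spectralLift_of_proxSet_eq_singleton hsym (hB t) (hP _ hct) (hp _ hzt)
  have hcV : ∀ᶠ t in 𝓝[>] (0 : ℝ), c t ∈ V := hc.continuousWithinAt.eventually_mem hVc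
  have hzV' : ∀ᶠ t in 𝓝[>] (0 : ℝ), z + t • d ∈ V' := by
    have : ContinuousAt (fun t : ℝ => z + t • d) 0 := by fun_prop
    exact nhdsWithin_le_nhds (this.eventually_mem (by simpa using hV'))
  have hPc' := (hasDerivWithinAt_spectralLift hB'.hasDerivWithinAt hℓ).congr_of_eventuallyEq
    (hcV.mp (hzV'.mono fun t hzt hct => hPc t hct hzt))
    (hPc 0 (mem_of_mem_nhds hVc) (by simpa using mem_of_mem_nhds hV'))
  exact ⟨_, hc0 ▸ hasDerivWithinAt_line_of_lipschitzOnWith hK hVc hc hPc'⟩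

end FrobeniusNorm

lemma eventually_nhdsGT_zero_iff {p : ℝ → Prop} :
    (∀ᶠ γ in 𝓝[>] 0, p γ) ↔ ∃ γ₀ > 0, ∀ γ, 0 < γ → γ < γ₀ → p γ := by
  simp only [Filter.Eventually, mem_nhdsGT_iff_exists_Ioo_subset, Set.subset_def, Set.mem_Ioo,
    Set.mem_Ioi, Set.mem_ofPred_eq, and_imp, gt_iff_lt]

theorem prox_dir_diff_spectral_general {n : ℕ} {θ : (Fin n → ℝ) → EReal} {X Y : Sym n}
    {U : Matrix (Fin n) (Fin n) ℝ} {x y : Fin n → ℝ} (hsym : SymmetricFn θ)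
    (hlsc : LowerSemicontinuous (specFn θ)) (hpb : ProxBounded ipM (specFn θ))
    (hY : LimSubgrad ipM (specFn θ) X Y) (hpr : ProxRegularAtFor ipM (specFn θ) X Y)
    (hU : U ∈ orthogonalGroup (Fin n) ℝ) (hXU : X = spectralLift U x)
    (hYU : Y = spectralLift U y) :
    ∀ᶠ γ in 𝓝[>] (0 : ℝ), (ProxSingleDirDiff ipM (specFn θ) γ (X + γ • Y) ↔
      ProxSingleDirDiff ipV θ γ (x + γ • y)) := by
  filter_upwards [eventually_exists_lipschitzOnWith_prox_sym hlsc hpb hY hpr]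
    with γ ⟨V, hV, P, K, hP, hK⟩
  have hlift : X + γ • Y = spectralLift U (x + γ • y) := by rw [hXU, hYU, map_add, map_smul]
  rw [hlift] at hV ⊢
  exact ⟨proxSingleDirDiff_of_specFn hsym hU,
    proxSingleDirDiff_specFn_of_lipschitzOnWith hsym hU hV hP hK⟩

/-- Corollary 4.7: directional differentiability of the proximal mapping of a
spectral function. -/
theorem prox_dir_diff_spectral {n : ℕ} (θ : (Fin n → ℝ) → EReal)
    (X Y : Sym n) (U : Matrix (Fin n) (Fin n) ℝ) (y : Fin n → ℝ)
    (hsym : SymmetricFn θ) (hLip : LocLipRelDom ipV θ)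
    (hlsc : LowerSemicontinuous (specFn θ))
    (hpb : ProxBounded ipM (specFn θ))
    (hY : LimSubgrad ipM (specFn θ) X Y)
    (hpr : ProxRegularAt ipM (specFn θ) X)
    (hsc : SubdiffContAt ipM (specFn θ) X)
    (hy : LimSubgrad ipV θ (eigval X.val) y)
    (hU : U ∈ eigOrth X.val)
    (hYdec : Y.val = U * Matrix.diagonal y * Uᵀ) :
    (∃ γ₀ > (0 : ℝ), ∀ γ : ℝ, 0 < γ → γ < γ₀ →
        ProxSingleDirDiff ipM (specFn θ) γ (X + γ • Y)) ↔
      (∃ γ₀ > (0 : ℝ), ∀ γ : ℝ, 0 < γ → γ < γ₀ →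
        ProxSingleDirDiff ipV θ γ (eigval X.val + γ • y)) := by
  simpa only [eventually_nhdsGT_zero_iff] using eventually_congr
    (prox_dir_diff_spectral_general hsym hlsc hpb hY (hpr Y hY)
      ((mem_orthogonalGroup_iff _ _).2 hU.1) (Subtype.ext hU.2) (Subtype.ext hYdec))

end SpecPaper
end
end
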